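/- For every k ∈ ℕ there exists a constant C_k > 0 such that for every multi-index J ∈ {0,…,n−1}^k, every t > 0 and every point of S with r > 0, one has |X_J (h_t ∘ r)| ≤ C_k Ψ̃_k(r,t) h_t(r). -/

import Mathlib

/-!
Put `w = cosh r`. On the group, `w = W p` is an explicit function, and away from the identity
`h_t ∘ r = F_0(t, W)` for a function `F_0` of `w`. Everything follows from the chain rule once two
facts are known.

*The radial fact* (`heat_seq`). There are non-negative functions `F_m` with `F_m' = -F_{m+1}` and
`F_{m+1} ≤ C_m Φ F_m`, where `Φ(t, r) = (1 + (1 + r)/t) / cosh r` and `C_m` does not depend on `t`.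
The point is that no cancellation occurs: up to constants `r / sinh (r/2)` is
`B 0 (cosh (r/2))`, where the functions `B i v = ∫₀¹ xⁱ (x² + 2vx + 1)^{-(i+1)} dx` satisfy
`(B i)' = -2(i+1) B (i+1)` and `B (i+1) ≤ B i / (2v)`. Hence the class `Cls`, generated from the
Gaussian by non-negative combinations and multiplication by `1/t`, `1/cosh (r/2)` and
`B i (cosh (r/2))`, is stable under `D2` and `D1`, and each operator costs at most its natural
weight (`Cls.step2`, `Cls.step1`). This gives the case of even `ν`. If `ν` is odd, the integral
defining `h_t` is `∫₀^∞ y^{-1/2} f(w + y) dy`, an operation that commutes with `d/dw`; since `Φ` is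
essentially decreasing in `r` (`Phi_anti`), the bound passes through it (`Cls.abel_step`).

*The geometric fact* (`factor_bound`). One has `a W = P` with `P` a polynomial in `√a, x, z` of
weighted degree at most four, and the fields `X_j` do not raise the weighted degree (`WP.deriv`).
Therefore `|X_I W| ≤ C W` for every `I`, while near the identity `|X_j W| ≤ C r` because `W` has a
minimum there (`Xf_W_bound`). It follows that `Φ |X_I W| ≤ C Ψ̃_{|I|}` for `I` non-empty.

By the chain rule `X_J F_0(W)` is a signed sum of terms `F_m(W) X_{I_1} W ⋯ X_{I_m} W` with all
`I_i` non-empty and `|I_1| + ⋯ + |I_m| = |J|` (`SC.exists`). Such a term is at most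
`C F_0(W) ∏ Φ |X_{I_i} W|`, and `Ψ̃_k Ψ̃_l ≤ Ψ̃_{k+l}` (`PsiT_mul`) concludes.
-/


open Real MeasureTheory Filter Topology

noncomputable section

namespace DR

/-- The operator `𝓡 g (r) = (1 / sinh r) g'(r)`. -/
def Rop (g : ℝ → ℝ) : ℝ → ℝ := fun r => (1 / Real.sinh r) * deriv g r

/-- The operator `-(1 / sinh r) d/dr`. -/
def D1 (g : ℝ → ℝ) : ℝ → ℝ := fun r => -(1 / Real.sinh r) * deriv g r

/-- The operator `-(1 / sinh (r/2)) d/dr`. -/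
def D2 (g : ℝ → ℝ) : ℝ → ℝ := fun r => -(1 / Real.sinh (r / 2)) * deriv g r

/-- The Gaussian `e^{-r²/(4t)}`. -/
def gauss (t : ℝ) : ℝ → ℝ := fun r => Real.exp (-r ^ 2 / (4 * t))

/-- `Q = (μ + 2ν)/2`. -/
def Qc (μ ν : ℕ) : ℝ := ((μ : ℝ) + 2 * ν) / 2

/-- `c_k = 2^{-μ-ν/2-1-k} π^{-n/2}` with `n = μ+ν+1`. -/
def cc (μ ν k : ℕ) : ℝ :=
  (2 : ℝ) ^ (-(μ : ℝ) - (ν : ℝ) / 2 - 1 - (k : ℝ)) *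
    Real.pi ^ (-(((μ : ℝ) + ν + 1)) / 2)

/-- The Damek–Ricci heat kernel `h_t`. -/
def heat (μ ν : ℕ) (t : ℝ) : ℝ → ℝ := fun r =>
  if Even ν then
    cc μ ν 0 * t ^ (-(1 : ℝ) / 2) * Real.exp (-(Qc μ ν) ^ 2 * t / 4) *
      (D1^[ν / 2] (D2^[μ / 2] (gauss t))) r
  else
    cc μ ν 0 * Real.pi ^ (-(1 : ℝ) / 2) * t ^ (-(1 : ℝ) / 2) *
      Real.exp (-(Qc μ ν) ^ 2 * t / 4) *
      ∫ s in Set.Ioi r, (Real.sinh s / Real.sqrt (Real.cosh s - Real.cosh r)) *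
        (D1^[(ν + 1) / 2] (D2^[μ / 2] (gauss t))) s

/-- `Ψ_k(r,t)`. -/
def Psi (k : ℕ) (r t : ℝ) : ℝ :=
  if 1 < r ∨ Even k then (1 + 1 / Real.sqrt t + r / t) ^ k
  else r * (1 + 1 / Real.sqrt t + r / t) ^ (k - 1) * (1 + 1 / t)

/-- `Ψ̃_k(r,t)`. -/
def PsiT (k : ℕ) (r t : ℝ) : ℝ :=
  if 1 < r ∨ Even k then (1 + 1 / Real.sqrt t + r / t) ^ k
  else (1 + 1 / Real.sqrt t + r / t) ^ (k - 1) * (1 + r / t)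

/-- `p_{a,b}(r) = sinh^a r cosh^b r`. -/
def pab (a b : ℕ) (r : ℝ) : ℝ := Real.sinh r ^ a * Real.cosh r ^ b

/-- `Θ_{p,q}(r)` (with real exponents, via `rpow`). -/
def Theta (p q : ℝ) (r : ℝ) : ℝ :=
  ((r / (1 + r)) * (Real.exp (r / 2) / (2 * Real.sinh (r / 2)))) ^ p *
    ((r / (1 + 2 * r)) * (Real.exp r / Real.sinh r)) ^ q

/-- Points of `S = ℝ^μ × ℝ^ν × (0,∞)` (the last coordinate ranges over `ℝ`;
statements are always restricted to `0 < a`). -/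
abbrev Pt (μ ν : ℕ) := (Fin μ → ℝ) × (Fin ν → ℝ) × ℝ

/-- The quantity `((√a + 1/√a)/2 + |x|²/(8√a))² + |z|²/(4a)`, equal to `cosh²(r/2)`. -/
def coshExpr (μ ν : ℕ) (p : Pt μ ν) : ℝ :=
  ((Real.sqrt p.2.2 + (Real.sqrt p.2.2)⁻¹) / 2 +
      (Real.sqrt p.2.2)⁻¹ * (∑ i, p.1 i ^ 2) / 8) ^ 2 +
    (p.2.2)⁻¹ * (∑ i, p.2.1 i ^ 2) / 4

/-- The vector field `X_0 = a ∂_a`. -/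
def X0op (μ ν : ℕ) (f : Pt μ ν → ℝ) : Pt μ ν → ℝ :=
  fun p => p.2.2 * deriv (fun s => f (p.1, p.2.1, s)) p.2.2

/-- The vector fields `X_j`, `j ∈ {0, …, n-1}`, `n = μ+ν+1`:
`X_0 = a ∂_a`, `X_ℓ = √a (∂_{x_ℓ} + (1/2) Σ_k (J_k x, e_ℓ) ∂_{z_k})` for `ℓ = 1,…,μ`,
and `X_{μ+k} = a ∂_{z_k}` for `k = 1,…,ν`. -/
def Xf (μ ν : ℕ) (Jm : Fin ν → Matrix (Fin μ) (Fin μ) ℝ) (j : Fin (μ + ν + 1))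
    (f : Pt μ ν → ℝ) : Pt μ ν → ℝ := fun p =>
  if h0 : (j : ℕ) = 0 then p.2.2 * deriv (fun s => f (p.1, p.2.1, s)) p.2.2
  else if hm : (j : ℕ) ≤ μ then
    Real.sqrt p.2.2 *
      (deriv (fun s => f (Function.update p.1 ⟨(j : ℕ) - 1, by omega⟩ s, p.2.1, p.2.2))
          (p.1 ⟨(j : ℕ) - 1, by omega⟩) +
        (1 / 2) * ∑ k : Fin ν, (Jm k).mulVec p.1 ⟨(j : ℕ) - 1, by omega⟩ *
          deriv (fun s => f (p.1, Function.update p.2.1 k s, p.2.2)) (p.2.1 k))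
  else
    p.2.2 *
      deriv (fun s =>
          f (p.1, Function.update p.2.1 ⟨(j : ℕ) - μ - 1, by have := j.isLt; omega⟩ s, p.2.2))
        (p.2.1 ⟨(j : ℕ) - μ - 1, by have := j.isLt; omega⟩)

/-- `X_J = X_{J_1} X_{J_2} ⋯ X_{J_k}` for a multi-index `J`. -/
def XL (μ ν : ℕ) (Jm : Fin ν → Matrix (Fin μ) (Fin μ) ℝ) :
    List (Fin (μ + ν + 1)) → (Pt μ ν → ℝ) → Pt μ ν → ℝ
  | [], f => f
  | j :: L, f => Xf μ ν Jm j (XL μ ν Jm L f)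

/-! ### The completely monotone building blocks -/

/-- `B i v = ∫₀¹ xⁱ / (x² + 2vx + 1)^{i+1} dx`. Up to a positive constant this is
`(-d/dv)^i B 0`, and `B 0 (cosh ρ) = ρ / (2 sinh ρ)`. -/
def B (i : ℕ) (v : ℝ) : ℝ := ∫ x in (0:ℝ)..1, x ^ i / (x ^ 2 + 2 * v * x + 1) ^ (i + 1)

lemma B_cont (i : ℕ) {v : ℝ} (hv : 0 ≤ v) (k : ℕ) :
    ContinuousOn (fun x : ℝ => x ^ i / (x ^ 2 + 2 * v * x + 1) ^ k) (Set.Icc 0 1) := by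
  apply ContinuousOn.div (by fun_prop) (by fun_prop)
  intro x hx
  have := hx.1
  positivity

lemma B_intble (i : ℕ) {v : ℝ} (hv : 0 ≤ v) (k : ℕ) :
    IntervalIntegrable (fun x : ℝ => x ^ i / (x ^ 2 + 2 * v * x + 1) ^ k) volume 0 1 := by
  apply ContinuousOn.intervalIntegrable
  rw [Set.uIcc_of_le zero_le_one]
  exact B_cont i hv k

lemma B_nonneg (i : ℕ) {v : ℝ} (hv : 0 ≤ v) : 0 ≤ B i v := by
  apply intervalIntegral.integral_nonneg zero_le_one
  intro x hx
  have := hx.1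
  positivity

lemma B_le_one (i : ℕ) {v : ℝ} (hv : 0 ≤ v) : B i v ≤ 1 := by
  have : B i v ≤ ∫ x in (0:ℝ)..1, (1:ℝ) := by
    apply intervalIntegral.integral_mono_on zero_le_one (B_intble i hv _) (by simp)
    intro x hx
    obtain ⟨h0, h1⟩ := hx
    rw [div_le_one (by positivity)]
    calc x ^ i ≤ 1 := pow_le_one₀ h0 h1
      _ ≤ _ := one_le_pow₀ (by nlinarith [mul_nonneg hv h0, sq_nonneg x])
  simpa using this

lemma B_succ_le (i : ℕ) {v : ℝ} (hv : 0 < v) : B (i + 1) v ≤ (1 / (2 * v)) * B i v := by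
  unfold B
  rw [← intervalIntegral.integral_const_mul]
  apply intervalIntegral.integral_mono_on zero_le_one (B_intble _ hv.le _)
    ((B_intble _ hv.le _).const_mul _)
  intro x hx
  have h0 := hx.1
  rw [div_mul_div_comm, one_mul, div_le_div_iff₀ (by positivity) (by positivity)]
  have : 2 * v * x ≤ x ^ 2 + 2 * v * x + 1 := by nlinarith
  calc x ^ (i + 1) * (2 * v * (x ^ 2 + 2 * v * x + 1) ^ (i + 1))
      = (2 * v * x) * (x ^ i * (x ^ 2 + 2 * v * x + 1) ^ (i + 1)) := by ring
    _ ≤ (x ^ 2 + 2 * v * x + 1) * (x ^ i * (x ^ 2 + 2 * v * x + 1) ^ (i + 1)) := by gcongr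
    _ = _ := by ring

lemma B_hasDeriv (i : ℕ) {v : ℝ} (hv : 0 < v) :
    HasDerivAt (B i) (-(2 * (i + 1)) * B (i + 1) v) v := by
  have key := intervalIntegral.hasDerivAt_integral_of_dominated_loc_of_deriv_le
    (F := fun v x => x ^ i / (x ^ 2 + 2 * v * x + 1) ^ (i + 1))
    (F' := fun v x => (-(2 * (i + 1))) * (x ^ (i + 1) / (x ^ 2 + 2 * v * x + 1) ^ (i + 1 + 1)))
    (μ := volume) (a := 0) (b := 1)
    (x₀ := v) (s := Set.Ioi 0) (bound := fun _ => 2 * (i + 1)) (Ioi_mem_nhds hv)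
    (by
      filter_upwards [Ioi_mem_nhds hv] with w hw
      exact (B_intble i (le_of_lt hw) _).def'.aestronglyMeasurable)
    (B_intble i hv.le _)
    ((B_intble (i + 1) hv.le _).const_mul _).def'.aestronglyMeasurable
    (by
      refine Eventually.of_forall fun x hx w hw => ?_
      rw [Set.uIoc_of_le zero_le_one] at hx
      have h0 := hx.1
      have hw : 0 < w := hw
      rw [norm_mul, norm_neg, Real.norm_of_nonneg (by positivity : (0:ℝ) ≤ 2 * (i + 1)),
        Real.norm_of_nonneg (by positivity)]
      refine mul_le_of_le_one_right (by positivity) ?_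
      rw [div_le_one (by positivity)]
      calc x ^ (i + 1) ≤ 1 := pow_le_one₀ h0.le hx.2
        _ ≤ _ := one_le_pow₀ (by nlinarith [mul_pos hw h0, sq_nonneg x]))
    (by simp)
    (by
      refine Eventually.of_forall fun x hx w hw => ?_
      rw [Set.uIoc_of_le zero_le_one] at hx
      have h0 := hx.1
      have hw : 0 < w := hw
      have hd : HasDerivAt (fun w : ℝ => (x ^ 2 + 2 * w * x + 1) ^ (i + 1))
          (((i + 1 : ℕ) : ℝ) * (x ^ 2 + 2 * w * x + 1) ^ i * (2 * x)) w := by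
        have h1 : HasDerivAt (fun w : ℝ => x ^ 2 + 2 * w * x + 1) (2 * x) w := by
          have := ((((hasDerivAt_id w).const_mul 2).mul_const x).const_add (x ^ 2)).add_const 1
          simpa using this
        simpa using h1.fun_pow (i + 1)
      have := (hasDerivAt_const w (x ^ i)).div hd (by positivity)
      refine this.congr_deriv ?_
      have hne : x ^ 2 + 2 * w * x + 1 ≠ 0 := by positivity
      push_cast
      field_simp
      ring)
  have h2 := key.2
  rw [intervalIntegral.integral_const_mul] at h2
  exact h2

/-- The denominator factors as `(x + e^{-ρ}) (x + e^ρ)`, so the integral is elementary. -/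
lemma B_zero {ρ : ℝ} (hρ : 0 < ρ) : B 0 (cosh ρ) = ρ / (2 * sinh ρ) := by
  have hs : 0 < sinh ρ := sinh_pos_iff.2 hρ
  have hcs : sinh ρ < cosh ρ := sinh_lt_cosh ρ
  have hsq := cosh_sq ρ
  have h : ∀ x ∈ Set.uIcc (0:ℝ) 1,
      HasDerivAt (fun x => 1 / (2 * sinh ρ) *
        (log (x + cosh ρ - sinh ρ) - log (x + cosh ρ + sinh ρ)))
      (x ^ 0 / (x ^ 2 + 2 * cosh ρ * x + 1) ^ (0 + 1)) x := by
    intro x hx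
    rw [Set.uIcc_of_le zero_le_one] at hx
    have h0 := hx.1
    have p1 : 0 < x + cosh ρ - sinh ρ := by linarith
    have p2 : 0 < x + cosh ρ + sinh ρ := by linarith
    have d1 : HasDerivAt (fun x => x + cosh ρ - sinh ρ) 1 x :=
      ((hasDerivAt_id x).add_const _).sub_const _
    have d2 : HasDerivAt (fun x => x + cosh ρ + sinh ρ) 1 x :=
      ((hasDerivAt_id x).add_const _).add_const _
    refine (((d1.log p1.ne').sub (d2.log p2.ne')).const_mul _).congr_deriv ?_
    have : x ^ 2 + 2 * cosh ρ * x + 1 = (x + cosh ρ - sinh ρ) * (x + cosh ρ + sinh ρ) := by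
      nlinarith
    rw [this]
    field_simp
    ring
  unfold B
  rw [intervalIntegral.integral_eq_sub_of_hasDerivAt h (B_intble 0 (cosh_pos ρ).le _)]
  have e1 : (0:ℝ) + cosh ρ - sinh ρ = exp (-ρ) := by rw [← cosh_sub_sinh]; ring
  have e2 : (0:ℝ) + cosh ρ + sinh ρ = exp ρ := by rw [← cosh_add_sinh]; ring
  have e3 : 1 + cosh ρ - sinh ρ = exp (-ρ) * (1 + cosh ρ + sinh ρ) := by
    have a : 1 + cosh ρ - sinh ρ = 1 + exp (-ρ) := by rw [← cosh_sub_sinh]; ring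
    have b : 1 + cosh ρ + sinh ρ = 1 + exp ρ := by rw [← cosh_add_sinh]; ring
    rw [a, b, mul_add, ← exp_add]
    simp [add_comm]
  rw [e3, e1, e2, log_mul (by positivity) (by positivity), log_exp, log_exp]
  field_simp
  ring

/-! ### The class generated by the Gaussian under `D1` and `D2` -/

/-- Functions `f t r` obtained from the Gaussian by multiplying with `1/t`, `1/cosh(r/2)` and
`B i (cosh(r/2))`, scaling by non-negative constants and adding. -/
inductive Cls : (ℝ → ℝ → ℝ) → Prop
  | gauss : Cls gauss
  | tinv {f} : Cls f → Cls (fun t r => 1 / t * f t r)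
  | vinv {f} : Cls f → Cls (fun t r => 1 / cosh (r / 2) * f t r)
  | b {f} (i : ℕ) : Cls f → Cls (fun t r => B i (cosh (r / 2)) * f t r)
  | smul {f} (c : ℝ) : 0 ≤ c → Cls f → Cls (fun t r => c * f t r)
  | add {f g} : Cls f → Cls g → Cls (fun t r => f t r + g t r)

lemma Cls.nonneg {f} (hf : Cls f) : ∀ t r, 0 < t → 0 ≤ f t r := by
  induction hf with
  | gauss => intro t r ht; exact (exp_pos _).le
  | tinv _ ih => intro t r ht; have := ih t r ht; positivity
  | vinv _ ih => intro t r ht; have := ih t r ht; positivity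
  | b i _ ih => intro t r ht; exact mul_nonneg (B_nonneg i (cosh_pos _).le) (ih t r ht)
  | smul c hc _ ih => intro t r ht; exact mul_nonneg hc (ih t r ht)
  | add _ _ ih1 ih2 => intro t r ht; exact add_nonneg (ih1 t r ht) (ih2 t r ht)

lemma Cls.le_gauss {f} (hf : Cls f) : ∀ t, 0 < t → ∃ C, 0 ≤ C ∧ ∀ r, f t r ≤ C * DR.gauss t r := by
  have gp : ∀ t r, 0 ≤ DR.gauss t r := fun t r => (exp_pos _).le
  induction hf with
  | gauss => intro t ht; exact ⟨1, zero_le_one, fun r => by simp⟩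
  | tinv _ ih =>
    intro t ht; obtain ⟨C, hC, h⟩ := ih t ht
    refine ⟨1 / t * C, by positivity, fun r => ?_⟩
    rw [mul_assoc]
    exact mul_le_mul_of_nonneg_left (h r) (by positivity)
  | @vinv f hf ih =>
    intro t ht; obtain ⟨C, hC, h⟩ := ih t ht
    refine ⟨C, hC, fun r => le_trans ?_ (h r)⟩
    refine mul_le_of_le_one_left (hf.nonneg t r ht) ?_
    rw [div_le_one (cosh_pos _)]; exact one_le_cosh _
  | @b f i hf ih =>
    intro t ht; obtain ⟨C, hC, h⟩ := ih t ht
    refine ⟨C, hC, fun r => le_trans ?_ (h r)⟩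
    exact mul_le_of_le_one_left (hf.nonneg t r ht) (B_le_one i (cosh_pos _).le)
  | smul c hc _ ih =>
    intro t ht; obtain ⟨C, hC, h⟩ := ih t ht
    refine ⟨c * C, by positivity, fun r => ?_⟩
    rw [mul_assoc]
    exact mul_le_mul_of_nonneg_left (h r) hc
  | add _ _ ih1 ih2 =>
    intro t ht
    obtain ⟨C, hC, h⟩ := ih1 t ht
    obtain ⟨C', hC', h'⟩ := ih2 t ht
    exact ⟨C + C', by positivity, fun r => by rw [add_mul]; exact add_le_add (h r) (h' r)⟩

lemma hasDeriv_ch (r : ℝ) : HasDerivAt (fun r : ℝ => cosh (r / 2)) (sinh (r / 2) / 2) r := by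
  have := ((hasDerivAt_id r).div_const 2).cosh
  refine this.congr_deriv ?_
  simp [div_eq_mul_inv]

/-- The class is stable under `D2`, and `D2` acts on each member with a logarithmic-derivative
bound that is uniform in `t`. -/
lemma Cls.step2 {f} (hf : Cls f) : ∃ g, Cls g ∧
    (∀ t r, 0 < t → 0 < r → HasDerivAt (f t) (-(sinh (r / 2)) * g t r) r) ∧
    ∃ C, 0 ≤ C ∧ ∀ t r, 0 < t → 0 < r →
      g t r ≤ C * (1 / cosh (r / 2) * (1 + (1 + r) / t)) * f t r := by
  induction hf with
  | gauss =>
    refine ⟨fun t r => 2 * (1 / t * (B 0 (cosh (r / 2)) * DR.gauss t r)),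
      .smul 2 (by norm_num) (.tinv (.b 0 .gauss)), ?_, 1, by norm_num, ?_⟩
    · intro t r ht hr
      have hs : 0 < sinh (r / 2) := sinh_pos_iff.2 (by positivity)
      have h1 : HasDerivAt (fun r : ℝ => -r ^ 2 / (4 * t)) (-(2 * r) / (4 * t)) r := by
        have := ((hasDerivAt_pow 2 r).neg).div_const (4 * t)
        simpa using this
      refine h1.exp.congr_deriv ?_
      beta_reduce
      rw [B_zero (by positivity)]
      unfold DR.gauss
      field_simp
      ring
    · intro t r ht hr
      have hs : 0 < sinh (r / 2) := sinh_pos_iff.2 (by positivity)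
      have hc := cosh_pos (r / 2)
      beta_reduce
      rw [B_zero (by positivity)]
      have hg : 0 ≤ DR.gauss t r := (exp_pos _).le
      have hle : r / 2 ≤ sinh (r / 2) := self_le_sinh_iff.2 (by positivity)
      have hc1 : cosh (r / 2) ≤ sinh (r / 2) + 1 := by
        have := cosh_sub_sinh (r / 2)
        have : exp (-(r / 2)) ≤ 1 := exp_le_one_iff.2 (by linarith)
        linarith
      have key : r / sinh (r / 2) ≤ 2 * ((1 + r) / cosh (r / 2)) := by
        rw [← mul_div_assoc, div_le_div_iff₀ hs hc]
        nlinarith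
      have e : 2 * (1 / t * (r / 2 / (2 * sinh (r / 2)) * DR.gauss t r))
          = (1 / (2 * t)) * (r / sinh (r / 2)) * DR.gauss t r := by
        field_simp
      rw [e]
      refine mul_le_mul_of_nonneg_right ?_ hg
      calc 1 / (2 * t) * (r / sinh (r / 2)) ≤ 1 / (2 * t) * (2 * ((1 + r) / cosh (r / 2))) := by
            gcongr
        _ = 1 / cosh (r / 2) * ((1 + r) / t) := by field_simp
        _ ≤ 1 * (1 / cosh (r / 2) * (1 + (1 + r) / t)) := by
            rw [one_mul]; gcongr; linarith
  | tinv _ ih =>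
    obtain ⟨g, hg, hd, C, hC, hb⟩ := ih
    refine ⟨_, .tinv hg, ?_, C, hC, ?_⟩
    · intro t r ht hr
      refine ((hd t r ht hr).const_mul (1 / t)).congr_deriv (by ring)
    · intro t r ht hr
      calc _ ≤ 1 / t * _ := mul_le_mul_of_nonneg_left (hb t r ht hr) (by positivity)
        _ = _ := by ring
  | @vinv f hf ih =>
    obtain ⟨g, hg, hd, C, hC, hb⟩ := ih
    refine ⟨_, .add (.smul (1 / 2) (by norm_num) (.vinv (.vinv hf))) (.vinv hg), ?_, C + 1 / 2,
      by positivity, ?_⟩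
    · intro t r ht hr
      have hc := cosh_pos (r / 2)
      have h1 := (hasDerivAt_const r (1:ℝ)).div (hasDeriv_ch r) hc.ne'
      refine (h1.mul (hd t r ht hr)).congr_deriv ?_
      simp only [Pi.div_apply]
      field_simp
      ring
    · intro t r ht hr
      have hc := cosh_pos (r / 2)
      have h1 : 1 / cosh (r / 2) * g t r ≤
          1 / cosh (r / 2) * (C * (1 / cosh (r / 2) * (1 + (1 + r) / t)) * f t r) :=
        mul_le_mul_of_nonneg_left (hb t r ht hr) (by positivity)
      have hfn := hf.nonneg t r ht
      have h2 : 1 / cosh (r / 2) * (1 / cosh (r / 2) * f t r) ≤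
          1 / cosh (r / 2) * (1 / cosh (r / 2) * f t r) * (1 + (1 + r) / t) := by
        apply le_mul_of_one_le_right (by positivity)
        have : 0 ≤ (1 + r) / t := by positivity
        linarith
      calc _ ≤ 1 / 2 * (1 / cosh (r / 2) * (1 / cosh (r / 2) * f t r) * (1 + (1 + r) / t))
            + 1 / cosh (r / 2) * (C * (1 / cosh (r / 2) * (1 + (1 + r) / t)) * f t r) := by
            gcongr
        _ = _ := by ring
  | @b f i hf ih =>
    obtain ⟨g, hg, hd, C, hC, hb⟩ := ih
    refine ⟨_, .add (.smul (i + 1) (by positivity) (.b (i + 1) hf)) (.b i hg), ?_,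
      C + (i + 1) / 2, by positivity, ?_⟩
    · intro t r ht hr
      have hc := cosh_pos (r / 2)
      have h1 := (B_hasDeriv i hc).comp r (hasDeriv_ch r)
      refine (h1.mul (hd t r ht hr)).congr_deriv ?_
      simp only [Function.comp]
      ring
    · intro t r ht hr
      have hc := cosh_pos (r / 2)
      have hB := B_nonneg i hc.le
      have h1 : B i (cosh (r / 2)) * g t r ≤
          B i (cosh (r / 2)) * (C * (1 / cosh (r / 2) * (1 + (1 + r) / t)) * f t r) :=
        mul_le_mul_of_nonneg_left (hb t r ht hr) hB
      have hfn := hf.nonneg t r ht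
      have h2 : B (i + 1) (cosh (r / 2)) * f t r ≤
          1 / (2 * cosh (r / 2)) * B i (cosh (r / 2)) * f t r * (1 + (1 + r) / t) := by
        refine le_trans (mul_le_mul_of_nonneg_right (B_succ_le i hc) hfn) ?_
        apply le_mul_of_one_le_right (by positivity)
        have : 0 ≤ (1 + r) / t := by positivity
        linarith
      calc _ ≤ (i + 1) * (1 / (2 * cosh (r / 2)) * B i (cosh (r / 2)) * f t r * (1 + (1 + r) / t))
            + B i (cosh (r / 2)) * (C * (1 / cosh (r / 2) * (1 + (1 + r) / t)) * f t r) := by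
            gcongr
        _ = _ := by field_simp; ring
  | smul c hc _ ih =>
    obtain ⟨g, hg, hd, C, hC, hb⟩ := ih
    refine ⟨_, .smul c hc hg, ?_, C, hC, ?_⟩
    · intro t r ht hr
      refine ((hd t r ht hr).const_mul c).congr_deriv (by ring)
    · intro t r ht hr
      calc _ ≤ c * _ := mul_le_mul_of_nonneg_left (hb t r ht hr) hc
        _ = _ := by ring
  | @add f f' hf hf' ih1 ih2 =>
    obtain ⟨g, hg, hd, C, hC, hb⟩ := ih1
    obtain ⟨g', hg', hd', C', hC', hb'⟩ := ih2
    refine ⟨_, .add hg hg', ?_, C + C', by positivity, ?_⟩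
    · intro t r ht hr
      refine ((hd t r ht hr).add (hd' t r ht hr)).congr_deriv (by ring)
    · intro t r ht hr
      have hc := cosh_pos (r / 2)
      have n1 := hf.nonneg t r ht
      have n2 := hf'.nonneg t r ht
      have := hb t r ht hr
      have := hb' t r ht hr
      have m1 : 0 ≤ C' * (1 / cosh (r / 2) * (1 + (1 + r) / t)) * f t r := by positivity
      have m2 : 0 ≤ C * (1 / cosh (r / 2) * (1 + (1 + r) / t)) * f' t r := by positivity
      nlinarith

/-- The weight controlling one application of `D1`. -/
def Phi (t r : ℝ) : ℝ := 1 / cosh r * (1 + (1 + r) / t)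

lemma Phi_nonneg {t r : ℝ} (ht : 0 < t) (hr : 0 ≤ r) : 0 ≤ Phi t r := by
  unfold Phi; positivity

/-- The analogue of `Cls.step2` for `D1`, since `sinh r = 2 sinh (r/2) cosh (r/2)`. -/
lemma Cls.step1 {f} (hf : Cls f) : ∃ g, Cls g ∧
    (∀ t r, 0 < t → 0 < r → HasDerivAt (f t) (-(sinh r) * g t r) r) ∧
    ∃ C, 0 ≤ C ∧ ∀ t r, 0 < t → 0 < r → g t r ≤ C * Phi t r * f t r := by
  obtain ⟨g, hg, hd, C, hC, hb⟩ := hf.step2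
  refine ⟨_, .smul (1 / 2) (by norm_num) (.vinv hg), ?_, C, hC, ?_⟩
  · intro t r ht hr
    have hc := cosh_pos (r / 2)
    refine (hd t r ht hr).congr_deriv ?_
    have : sinh r = 2 * sinh (r / 2) * cosh (r / 2) := by
      rw [← sinh_two_mul]; ring_nf
    rw [this]
    field_simp
  · intro t r ht hr
    have hc := cosh_pos (r / 2)
    have hfn := hf.nonneg t r ht
    have e : cosh r ≤ 2 * cosh (r / 2) ^ 2 := by
      have h1 : cosh r = cosh (r / 2) ^ 2 + sinh (r / 2) ^ 2 := by
        rw [← cosh_two_mul]; ring_nf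
      have := cosh_sq (r / 2)
      linarith
    calc 1 / 2 * (1 / cosh (r / 2) * g t r)
        ≤ 1 / 2 * (1 / cosh (r / 2) * (C * (1 / cosh (r / 2) * (1 + (1 + r) / t)) * f t r)) := by
          have := hb t r ht hr
          gcongr
      _ = C * (1 / (2 * cosh (r / 2) ^ 2) * (1 + (1 + r) / t)) * f t r := by field_simp
      _ ≤ _ := by
          unfold Phi
          have := cosh_pos r
          gcongr

/-- `Phi` is decreasing in `r` up to a factor two, because `(1 + r) e^{-r}` is decreasing. -/
lemma Phi_anti {t r s : ℝ} (ht : 0 < t) (hr : 0 ≤ r) (hrs : r ≤ s) : Phi t s ≤ 2 * Phi t r := by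
  have h0 : exp (-s) * (1 + s) ≤ exp (-r) * (1 + r) := by
    have h1 : 1 + s ≤ (1 + r) * exp (s - r) := by
      have := add_one_le_exp (s - r)
      nlinarith [mul_nonneg hr (sub_nonneg.2 hrs)]
    calc exp (-s) * (1 + s) ≤ exp (-s) * ((1 + r) * exp (s - r)) := by gcongr
      _ = exp (-r) * (1 + r) := by
        rw [mul_comm (1 + r), ← mul_assoc, ← exp_add]; ring_nf
  have hs : 1 / cosh s ≤ 2 * exp (-s) := by
    rw [div_le_iff₀ (cosh_pos s), cosh_eq, exp_neg]
    have := exp_pos s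
    field_simp
    have : 0 ≤ (exp s)⁻¹ := by positivity
    nlinarith
  have hr' : exp (-r) ≤ 1 / cosh r := by
    rw [le_div_iff₀ (cosh_pos r), cosh_eq, exp_neg]
    have h1 : 1 ≤ exp r := one_le_exp hr
    field_simp
    nlinarith
  have hexp : exp (-s) ≤ exp (-r) := exp_le_exp.2 (by linarith)
  have hs0 : 0 ≤ s := hr.trans hrs
  unfold Phi
  calc 1 / cosh s * (1 + (1 + s) / t) ≤ 2 * exp (-s) * (1 + (1 + s) / t) := by gcongr
    _ = 2 * (exp (-s) + exp (-s) * (1 + s) / t) := by ring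
    _ ≤ 2 * (exp (-r) + exp (-r) * (1 + r) / t) := by gcongr
    _ = 2 * (exp (-r) * (1 + (1 + r) / t)) := by ring
    _ ≤ _ := by gcongr

/-! ### The heat kernel as a function of `cosh r` -/

lemma Cls.D2 {f} (hf : Cls f) {h : ℝ → ℝ → ℝ} (hh : ∀ t r, 0 < t → 0 < r → h t r = f t r) :
    ∃ g, Cls g ∧ ∀ t r, 0 < t → 0 < r → DR.D2 (h t) r = g t r := by
  obtain ⟨g, hg, hd, -⟩ := hf.step2
  refine ⟨g, hg, fun t r ht hr => ?_⟩
  have e : h t =ᶠ[𝓝 r] f t := by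
    filter_upwards [Ioi_mem_nhds hr] with s hs using hh t s ht hs
  have hs : 0 < sinh (r / 2) := sinh_pos_iff.2 (by positivity)
  unfold DR.D2
  rw [e.deriv_eq, (hd t r ht hr).deriv]
  field_simp

lemma Cls.D1 {f} (hf : Cls f) {h : ℝ → ℝ → ℝ} (hh : ∀ t r, 0 < t → 0 < r → h t r = f t r) :
    ∃ g, Cls g ∧ ∀ t r, 0 < t → 0 < r → DR.D1 (h t) r = g t r := by
  obtain ⟨g, hg, hd, -⟩ := hf.step1
  refine ⟨g, hg, fun t r ht hr => ?_⟩
  have e : h t =ᶠ[𝓝 r] f t := by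
    filter_upwards [Ioi_mem_nhds hr] with s hs using hh t s ht hs
  have hs : 0 < sinh r := sinh_pos_iff.2 hr
  unfold DR.D1
  rw [e.deriv_eq, (hd t r ht hr).deriv]
  field_simp

/-- The iterates of `D1` and `D2` on the Gaussian agree on `r > 0` with a member of `Cls`. -/
lemma Cls.iter (p q : ℕ) :
    ∃ g, Cls g ∧ ∀ t r, 0 < t → 0 < r → (DR.D1^[q] (DR.D2^[p] (DR.gauss t))) r = g t r := by
  have h2 : ∃ g, Cls g ∧ ∀ t r, 0 < t → 0 < r → (DR.D2^[p] (DR.gauss t)) r = g t r := by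
    induction p with
    | zero => exact ⟨_, .gauss, fun t r _ _ => rfl⟩
    | succ p ih =>
      obtain ⟨g, hg, h⟩ := ih
      obtain ⟨g', hg', h'⟩ := hg.D2 (h := fun t => DR.D2^[p] (DR.gauss t)) h
      exact ⟨g', hg', fun t r ht hr => by
        rw [Function.iterate_succ_apply']; exact h' t r ht hr⟩
  induction q with
  | zero => exact h2
  | succ q ih =>
    obtain ⟨g, hg, h⟩ := ih
    obtain ⟨g', hg', h'⟩ := hg.D1 (h := fun t => DR.D1^[q] (DR.D2^[p] (DR.gauss t))) h
    exact ⟨g', hg', fun t r ht hr => by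
      rw [Function.iterate_succ_apply']; exact h' t r ht hr⟩

/-- `-G` is the derivative of `F` in the variable `w = cosh r`, `F` is non-negative, and `G` is
dominated by `F` with the weight `Phi`, uniformly in `t`. -/
def Step (F G : ℝ → ℝ → ℝ) : Prop :=
  (∀ t w, 0 < t → 1 < w → HasDerivAt (F t) (-(G t w)) w) ∧
  (∀ t w, 0 < t → 1 < w → 0 ≤ F t w) ∧
  ∃ C, 0 ≤ C ∧ ∀ t w, 0 < t → 1 < w → G t w ≤ C * Phi t (arcosh w) * F t w

lemma Step.const_mul {F G} (h : Step F G) {c : ℝ → ℝ} (hc : ∀ t, 0 < t → 0 ≤ c t) :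
    Step (fun t w => c t * F t w) (fun t w => c t * G t w) := by
  obtain ⟨h1, h2, C, hC, h3⟩ := h
  refine ⟨fun t w ht hw => ?_, fun t w ht hw => mul_nonneg (hc t ht) (h2 t w ht hw),
    C, hC, fun t w ht hw => ?_⟩
  · exact ((h1 t w ht hw).const_mul (c t)).congr_deriv (by ring)
  · calc c t * G t w ≤ c t * (C * Phi t (arcosh w) * F t w) :=
        mul_le_mul_of_nonneg_left (h3 t w ht hw) (hc t ht)
      _ = _ := by ring

/-- The function `f t` written in the variable `w = cosh r`. -/
def hat (f : ℝ → ℝ → ℝ) (t w : ℝ) : ℝ := f t (arcosh w)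

lemma Cls.step {f} (hf : Cls f) : ∃ g, Cls g ∧ Step (hat f) (hat g) := by
  obtain ⟨g, hg, hd, C, hC, hb⟩ := hf.step1
  refine ⟨g, hg, fun t w ht hw => ?_, fun t w ht hw => hf.nonneg t _ ht, C, hC,
    fun t w ht hw => hb t _ ht (arcosh_pos hw)⟩
  have h1 := (hd t (arcosh w) ht (arcosh_pos hw)).comp w (hasDerivAt_arcosh hw)
  refine h1.congr_deriv ?_
  rw [sinh_arcosh hw.le]
  have : 0 < √(w ^ 2 - 1) := Real.sqrt_pos.2 (by nlinarith)
  unfold hat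
  field_simp

/-- `e^{-r²/(4t)} ≤ e^{t-r}`, by completing the square. -/
lemma gauss_le (t : ℝ) (ht : 0 < t) : ∃ C, 0 ≤ C ∧ ∀ r, 0 ≤ r → gauss t r ≤ C * (1 / cosh r) := by
  refine ⟨exp t, (exp_pos _).le, fun r hr => ?_⟩
  unfold gauss
  have h1 : exp (-r) ≤ 1 / cosh r := by
    rw [le_div_iff₀ (cosh_pos r), cosh_eq, exp_neg]
    have h1 : 1 ≤ exp r := one_le_exp hr
    field_simp
    nlinarith
  calc exp (-r ^ 2 / (4 * t)) ≤ exp (t + -r) := by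
        apply exp_le_exp.2
        rw [div_le_iff₀ (by positivity)]
        nlinarith [sq_nonneg (r - 2 * t)]
    _ = exp t * exp (-r) := exp_add _ _
    _ ≤ _ := by gcongr

lemma Cls.hat_le {f} (hf : Cls f) (t : ℝ) (ht : 0 < t) :
    ∃ C, 0 ≤ C ∧ ∀ w, 1 ≤ w → hat f t w ≤ C * (1 / w) := by
  obtain ⟨C, hC, h⟩ := hf.le_gauss t ht
  obtain ⟨C', hC', h'⟩ := gauss_le t ht
  refine ⟨C * C', by positivity, fun w hw => ?_⟩
  refine (h _).trans ?_
  have := h' _ (arcosh_nonneg hw)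
  rw [cosh_arcosh hw] at this
  rw [mul_assoc]
  gcongr

lemma Cls.hat_cont {f} (hf : Cls f) (t : ℝ) (ht : 0 < t) : ContinuousOn (hat f t) (Set.Ioi 1) := by
  obtain ⟨g, -, h, -⟩ := hf.step
  exact fun w hw => (h t w ht hw).continuousAt.continuousWithinAt

/-- `y^{-1/2} / (1 + y)` is the derivative of `2 arctan √y`. -/
lemma kernel_integrable : IntegrableOn (fun y : ℝ => (√y)⁻¹ * (1 / (1 + y))) (Set.Ioi 0) := by
  refine integrableOn_Ioi_deriv_of_nonneg (g := fun y => 2 * arctan (√y)) (l := 2 * (π / 2))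
    ?_ ?_ ?_ ?_
  · exact Continuous.continuousWithinAt
      (continuous_const.mul (continuous_arctan.comp Real.continuous_sqrt))
  · intro y hy
    have hy : 0 < y := hy
    have h1 := ((hasDerivAt_sqrt hy.ne').arctan).const_mul 2
    refine h1.congr_deriv ?_
    rw [Real.sq_sqrt hy.le]
    have := Real.sqrt_pos.2 hy
    field_simp
  · intro y hy
    have hy : 0 < y := hy
    positivity
  · have h1 : Tendsto arctan atTop (𝓝 (π / 2)) := tendsto_arctan_atTop.mono_right nhdsWithin_le_nhds
    exact (h1.comp tendsto_sqrt_atTop).const_mul 2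

/-- The Abel transform of `f` in the variable `w = cosh r`. -/
def abel (f : ℝ → ℝ → ℝ) (t w : ℝ) : ℝ := ∫ y in Set.Ioi (0:ℝ), (√y)⁻¹ * hat f t (w + y)

lemma Cls.abel_meas {f} (hf : Cls f) {t w : ℝ} (ht : 0 < t) (hw : 1 < w) :
    AEStronglyMeasurable (fun y => (√y)⁻¹ * hat f t (w + y)) (volume.restrict (Set.Ioi 0)) := by
  refine ContinuousOn.aestronglyMeasurable ?_ measurableSet_Ioi
  refine ContinuousOn.mul ?_ ?_
  · exact Real.continuous_sqrt.continuousOn.inv₀ fun y hy => (Real.sqrt_pos.2 hy).ne'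
  · refine (hf.hat_cont t ht).comp (by fun_prop) ?_
    intro y hy
    have hy : 0 < y := hy
    show 1 < w + y
    linarith

lemma Cls.abel_bound {f} (hf : Cls f) {t : ℝ} (ht : 0 < t) :
    ∃ C, ∀ w y, 1 < w → 0 < y → ‖(√y)⁻¹ * hat f t (w + y)‖ ≤ C * ((√y)⁻¹ * (1 / (1 + y))) := by
  obtain ⟨C, hC, h⟩ := hf.hat_le t ht
  refine ⟨C, fun w y hw hy => ?_⟩
  have h0 : 0 ≤ hat f t (w + y) := hf.nonneg t _ ht
  rw [Real.norm_of_nonneg (by positivity)]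
  calc (√y)⁻¹ * hat f t (w + y) ≤ (√y)⁻¹ * (C * (1 / (1 + y))) := by
        gcongr
        refine (h _ (by linarith)).trans ?_
        gcongr
    _ = _ := by ring

lemma Cls.abel_integrable {f} (hf : Cls f) {t w : ℝ} (ht : 0 < t) (hw : 1 < w) :
    IntegrableOn (fun y => (√y)⁻¹ * hat f t (w + y)) (Set.Ioi 0) := by
  obtain ⟨C, h⟩ := hf.abel_bound ht
  refine Integrable.mono' (kernel_integrable.const_mul C) (hf.abel_meas ht hw) ?_
  filter_upwards [ae_restrict_mem measurableSet_Ioi] with y hy using h w y hw hy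

lemma Cls.abel_nonneg {f} (hf : Cls f) {t w : ℝ} (ht : 0 < t) : 0 ≤ abel f t w := by
  refine setIntegral_nonneg measurableSet_Ioi fun y hy => ?_
  have := hf.nonneg t (arcosh (w + y)) ht
  unfold hat
  positivity

/-- The Abel transform commutes with `-d/dw`, and it preserves the weighted bound because `Phi`
is essentially decreasing. -/
lemma Cls.abel_step {f} (hf : Cls f) : ∃ g, Cls g ∧ Step (abel f) (abel g) := by
  obtain ⟨g, hg, hd, -, C, hC, hb⟩ := hf.step
  refine ⟨g, hg, fun t w ht hw => ?_, fun t w ht hw => hf.abel_nonneg ht, 2 * C, by positivity,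
    fun t w ht hw => ?_⟩
  · obtain ⟨C', hC'⟩ := hg.abel_bound ht
    have key := (hasDerivAt_integral_of_dominated_loc_of_deriv_le
      (μ := volume.restrict (Set.Ioi (0:ℝ))) (F := fun w y => (√y)⁻¹ * hat f t (w + y))
      (F' := fun w y => -((√y)⁻¹ * hat g t (w + y))) (x₀ := w) (s := Set.Ioi 1)
      (bound := fun y => C' * ((√y)⁻¹ * (1 / (1 + y)))) (Ioi_mem_nhds hw)
      (by
        filter_upwards [Ioi_mem_nhds hw] with v hv using hf.abel_meas ht hv)
      (hf.abel_integrable ht hw) (hg.abel_meas ht hw).neg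
      (by
        filter_upwards [ae_restrict_mem measurableSet_Ioi] with y hy v hv
        rw [norm_neg]
        exact hC' v y hv hy)
      (kernel_integrable.const_mul C')
      (by
        filter_upwards [ae_restrict_mem measurableSet_Ioi] with y hy v hv
        have hy : 0 < y := hy
        have hv : 1 < v := hv
        have h1 := hd t (v + y) ht (by linarith)
        have h2 := (h1.comp_add_const v y).const_mul (√y)⁻¹
        exact h2.congr_deriv (by ring))).2
    rw [integral_neg] at key
    exact key
  · unfold abel
    rw [← integral_const_mul]
    refine setIntegral_mono_on (hg.abel_integrable ht hw)
      ((hf.abel_integrable ht hw).const_mul _) measurableSet_Ioi fun y hy => ?_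
    have hy : 0 < y := hy
    have h1 : Phi t (arcosh (w + y)) ≤ 2 * Phi t (arcosh w) :=
      Phi_anti ht (arcosh_nonneg hw.le)
        ((arcosh_le_arcosh (by linarith) (by linarith)).2 (by linarith))
    have h0 : 0 ≤ hat f t (w + y) := hf.nonneg t _ ht
    calc (√y)⁻¹ * hat g t (w + y)
        ≤ (√y)⁻¹ * (C * Phi t (arcosh (w + y)) * hat f t (w + y)) := by
          have := hb t (w + y) ht (by linarith)
          gcongr
      _ ≤ (√y)⁻¹ * (C * (2 * Phi t (arcosh w)) * hat f t (w + y)) := by gcongr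
      _ = _ := by ring

/-- The substitution `cosh s = cosh r + y` in the integral defining the heat kernel for odd `ν`. -/
lemma abel_eq (f : ℝ → ℝ → ℝ) (t : ℝ) {r : ℝ} (hr : 0 < r) :
    ∫ s in Set.Ioi r, (sinh s / √(cosh s - cosh r)) * f t s = abel f t (cosh r) := by
  have him : (fun s => cosh s - cosh r) '' Set.Ioi r = Set.Ioi 0 := by
    ext y
    constructor
    · rintro ⟨s, hs, rfl⟩
      have hs : r < s := hs
      have : cosh r < cosh s := by
        rw [cosh_lt_cosh, abs_of_pos hr, abs_of_pos (hr.trans hs)]; exact hs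
      exact sub_pos.2 this
    · intro hy
      have hy : 0 < y := hy
      have h1 : 1 ≤ cosh r + y := by linarith [one_le_cosh r]
      refine ⟨arcosh (cosh r + y), ?_, by simp [cosh_arcosh h1]⟩
      show r < _
      nth_rewrite 1 [← arcosh_cosh hr.le]
      rw [arcosh_lt_arcosh (cosh_pos r) (by linarith)]
      linarith
  unfold abel
  rw [← him, integral_image_eq_integral_abs_deriv_smul (f' := sinh) measurableSet_Ioi
    (fun x _ => ((hasDerivAt_cosh x).sub_const _).hasDerivWithinAt)]
  · refine setIntegral_congr_fun measurableSet_Ioi fun s hs => ?_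
    have hs : 0 < s := hr.trans hs
    have : 0 < sinh s := sinh_pos_iff.2 hs
    simp only [hat, smul_eq_mul, abs_of_pos this, add_sub_cancel, arcosh_cosh hs.le]
    ring
  · intro a ha b hb hab
    have ha : 0 < a := hr.trans ha
    have hb : 0 < b := hr.trans hb
    have : cosh a = cosh b := by simpa using hab
    rw [← arcosh_cosh ha.le, this, arcosh_cosh hb.le]

/-- Iterating a transform `T` that turns every member of `Cls` into the start of a `Step`. -/
lemma exists_seq (T : (ℝ → ℝ → ℝ) → ℝ → ℝ → ℝ)
    (hT : ∀ f, Cls f → ∃ g, Cls g ∧ Step (T f) (T g)) {f} (hf : Cls f) :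
    ∃ F : ℕ → ℝ → ℝ → ℝ, F 0 = T f ∧ ∀ m, Step (F m) (F (m + 1)) := by
  choose! nx h1 h2 using hT
  have h : ∀ m, Cls (nx^[m] f) := by
    intro m
    induction m with
    | zero => exact hf
    | succ m ih => rw [Function.iterate_succ_apply']; exact h1 _ ih
  refine ⟨fun m => T (nx^[m] f), rfl, fun m => ?_⟩
  beta_reduce
  rw [Function.iterate_succ_apply']
  exact h2 _ (h m)

/-- In the variable `w = cosh r`, the heat kernel starts a sequence of successive derivatives
(up to sign) each of which is controlled by the previous one. -/
theorem heat_seq (μ ν : ℕ) : ∃ F : ℕ → ℝ → ℝ → ℝ,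
    (∀ t r, 0 < t → 0 < r → heat μ ν t r = F 0 t (cosh r)) ∧ ∀ m, Step (F m) (F (m + 1)) := by
  have hcc : 0 ≤ cc μ ν 0 := by unfold cc; positivity
  by_cases hν : Even ν
  · obtain ⟨f, hf, hfe⟩ := Cls.iter (μ / 2) (ν / 2)
    obtain ⟨F, hF0, hF⟩ := exists_seq hat (fun f hf => hf.step) hf
    refine ⟨fun m t w => cc μ ν 0 * t ^ (-(1 : ℝ) / 2) * Real.exp (-(Qc μ ν) ^ 2 * t / 4) *
      F m t w, fun t r ht hr => ?_, fun m => (hF m).const_mul fun t ht => by positivity⟩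
    simp only [heat, if_pos hν, hF0, hat, arcosh_cosh hr.le, hfe t r ht hr]
  · obtain ⟨f, hf, hfe⟩ := Cls.iter (μ / 2) ((ν + 1) / 2)
    obtain ⟨F, hF0, hF⟩ := exists_seq abel (fun f hf => hf.abel_step) hf
    refine ⟨fun m t w => cc μ ν 0 * Real.pi ^ (-(1 : ℝ) / 2) * t ^ (-(1 : ℝ) / 2) *
      Real.exp (-(Qc μ ν) ^ 2 * t / 4) * F m t w, fun t r ht hr => ?_,
      fun m => (hF m).const_mul fun t ht => by positivity⟩
    simp only [heat, if_neg hν, hF0]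
    rw [← abel_eq f t hr]
    congr 1
    refine setIntegral_congr_fun measurableSet_Ioi fun s hs => ?_
    simp only [hfe t s ht (hr.trans hs)]

/-! ### Directional derivatives along the fields `X_j` -/

section Fields

variable {μ ν : ℕ} {Jm : Fin ν → Matrix (Fin μ) (Fin μ) ℝ}

/-- The tangent vector at `p` of the vector field `X_j`. -/
def V (Jm : Fin ν → Matrix (Fin μ) (Fin μ) ℝ) (j : Fin (μ + ν + 1)) (p : Pt μ ν) : Pt μ ν :=
  if h0 : (j : ℕ) = 0 then (0, 0, p.2.2)
  else if hm : (j : ℕ) ≤ μ then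
    (√p.2.2 • Pi.single ⟨(j : ℕ) - 1, by omega⟩ 1,
      fun k => √p.2.2 * ((1 / 2) * (Jm k).mulVec p.1 ⟨(j : ℕ) - 1, by omega⟩), 0)
  else (0, p.2.2 • Pi.single ⟨(j : ℕ) - μ - 1, by have := j.isLt; omega⟩ 1, 0)

/-- `f` is differentiable at `p` and its derivative along `X_j` is `y`. -/
def XD (Jm : Fin ν → Matrix (Fin μ) (Fin μ) ℝ) (j : Fin (μ + ν + 1)) (f : Pt μ ν → ℝ)
    (p : Pt μ ν) (y : ℝ) : Prop :=
  ∃ L : Pt μ ν →L[ℝ] ℝ, HasFDerivAt f L p ∧ L (V Jm j p) = y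

section
variable {j : Fin (μ + ν + 1)} {f g : Pt μ ν → ℝ} {p : Pt μ ν} {y y' : ℝ}

/-- The partial derivatives defining `X_j` recover the total derivative along `V`. -/
lemma XD.Xf_eq (h : XD Jm j f p y) : Xf μ ν Jm j f p = y := by
  obtain ⟨L, hL, rfl⟩ := h
  obtain ⟨x, z, a⟩ := p
  have hx : ∀ i, deriv (fun s => f (Function.update x i s, z, a)) (x i)
      = L (Pi.single i 1, 0, 0) := by
    intro i
    have h1 : HasDerivAt (fun s => ((Function.update x i s, z, a) : Pt μ ν))
        (Pi.single i 1, 0, 0) (x i) :=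
      (hasDerivAt_update x i (x i)).prodMk ((hasDerivAt_const _ z).prodMk (hasDerivAt_const _ a))
    have hL' : HasFDerivAt f L (Function.update x i (x i), z, a) := by simpa using hL
    exact (hL'.comp_hasDerivAt (x i) h1).deriv
  have hz : ∀ i, deriv (fun s => f (x, Function.update z i s, a)) (z i)
      = L (0, Pi.single i 1, 0) := by
    intro i
    have h1 : HasDerivAt (fun s => ((x, Function.update z i s, a) : Pt μ ν))
        (0, Pi.single i 1, 0) (z i) :=
      (hasDerivAt_const _ x).prodMk ((hasDerivAt_update z i (z i)).prodMk (hasDerivAt_const _ a))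
    have hL' : HasFDerivAt f L (x, Function.update z i (z i), a) := by simpa using hL
    exact (hL'.comp_hasDerivAt (z i) h1).deriv
  have ha : deriv (fun s => f (x, z, s)) a = L (0, 0, 1) := by
    have h1 : HasDerivAt (fun s => ((x, z, s) : Pt μ ν)) (0, 0, 1) a :=
      (hasDerivAt_const _ x).prodMk ((hasDerivAt_const _ z).prodMk (hasDerivAt_id a))
    exact (hL.comp_hasDerivAt a h1).deriv
  unfold Xf V
  dsimp only
  split_ifs with h0 hm
  · rw [ha, ← smul_eq_mul, ← map_smul]
    simp
  · simp only [hx, hz]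
    rw [← smul_eq_mul (√a), ← smul_eq_mul (1 / 2)]
    simp only [← smul_eq_mul ((Jm _).mulVec x _)]
    simp only [← map_smul, ← map_sum, ← map_add]
    congr 1
    refine Prod.ext ?_ (Prod.ext ?_ ?_)
    · simp [Prod.fst_sum]
    · ext k
      simp [Prod.snd_sum, Prod.fst_sum, Finset.sum_apply, Pi.single_apply]
    · simp [Prod.snd_sum]
  · rw [hz, ← smul_eq_mul, ← map_smul]
    simp

lemma XD.congr (h : XD Jm j f p y) (e : g =ᶠ[𝓝 p] f) : XD Jm j g p y := by
  obtain ⟨L, hL, h⟩ := h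
  exact ⟨L, hL.congr_of_eventuallyEq e, h⟩

lemma XD.congr_val (h : XD Jm j f p y) (e : y = y') : XD Jm j f p y' := e ▸ h

lemma XD.const (c : ℝ) : XD Jm j (fun _ => c) p 0 :=
  ⟨0, hasFDerivAt_const c p, rfl⟩

lemma XD.add (h : XD Jm j f p y) (h' : XD Jm j g p y') :
    XD Jm j (fun q => f q + g q) p (y + y') := by
  obtain ⟨L, hL, rfl⟩ := h
  obtain ⟨L', hL', rfl⟩ := h'
  exact ⟨_, hL.add hL', rfl⟩

lemma XD.neg (h : XD Jm j f p y) : XD Jm j (fun q => -f q) p (-y) := by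
  obtain ⟨L, hL, rfl⟩ := h
  exact ⟨_, hL.neg, rfl⟩

lemma XD.mul (h : XD Jm j f p y) (h' : XD Jm j g p y') :
    XD Jm j (fun q => f q * g q) p (f p * y' + y * g p) := by
  obtain ⟨L, hL, rfl⟩ := h
  obtain ⟨L', hL', rfl⟩ := h'
  refine ⟨_, hL.mul hL', ?_⟩
  simp
  ring

lemma XD.comp {φ : ℝ → ℝ} {φ' : ℝ} (hφ : HasDerivAt φ φ' (f p)) (h : XD Jm j f p y) :
    XD Jm j (fun q => φ (f q)) p (φ' * y) := by
  obtain ⟨L, hL, rfl⟩ := h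
  refine ⟨_, hφ.comp_hasFDerivAt p hL, ?_⟩
  simp

lemma XD.sum {ι : Type*} (s : Finset ι) {f : ι → Pt μ ν → ℝ} {y : ι → ℝ}
    (h : ∀ i ∈ s, XD Jm j (f i) p (y i)) : XD Jm j (fun q => ∑ i ∈ s, f i q) p (∑ i ∈ s, y i) := by
  classical
  induction s using Finset.induction_on with
  | empty => simpa using XD.const 0
  | insert a s ha ih =>
    simp only [Finset.sum_insert ha]
    exact (h a (by simp)).add (ih fun i hi => h i (by simp [hi]))

lemma XD.of_clm (L : Pt μ ν →L[ℝ] ℝ) : XD Jm j (fun q => L q) p (L (V Jm j p)) :=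
  ⟨L, L.hasFDerivAt, rfl⟩

lemma XD.x (i : Fin μ) : XD Jm j (fun q => q.1 i) p ((V Jm j p).1 i) :=
  XD.of_clm ((ContinuousLinearMap.proj i).comp (ContinuousLinearMap.fst ℝ _ _))

lemma XD.z (k : Fin ν) : XD Jm j (fun q => q.2.1 k) p ((V Jm j p).2.1 k) :=
  XD.of_clm ((ContinuousLinearMap.proj k).comp ((ContinuousLinearMap.fst ℝ _ _).comp
    (ContinuousLinearMap.snd ℝ _ _)))

lemma XD.a : XD Jm j (fun q => q.2.2) p (V Jm j p).2.2 :=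
  XD.of_clm ((ContinuousLinearMap.snd ℝ _ _).comp (ContinuousLinearMap.snd ℝ _ _))

end

/-! ### Weighted polynomials -/

/-- Polynomials in `√a`, `x`, `z` of weighted degree at most `d`, where `√a` and `x` have weight
one and `z` has weight two. -/
inductive WP (μ ν : ℕ) : ℕ → (Pt μ ν → ℝ) → Prop
  | const (c : ℝ) : WP μ ν 0 (fun _ => c)
  | sqrt : WP μ ν 1 (fun p => √p.2.2)
  | x (i) : WP μ ν 1 (fun p => p.1 i)
  | z (k) : WP μ ν 2 (fun p => p.2.1 k)
  | mul {d e f g} : WP μ ν d f → WP μ ν e g → WP μ ν (d + e) (fun p => f p * g p)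
  | add {d f g} : WP μ ν d f → WP μ ν d g → WP μ ν d (fun p => f p + g p)
  | mono {d e f} : d ≤ e → WP μ ν d f → WP μ ν e f

lemma WP.smul {d f} (c : ℝ) (h : WP μ ν d f) : WP μ ν d (fun p => c * f p) :=
  .mono (by omega) (.mul (.const c) h)

lemma WP.sum {ι : Type*} (s : Finset ι) {d : ℕ} {f : ι → Pt μ ν → ℝ} (h : ∀ i, WP μ ν d (f i)) :
    WP μ ν d (fun p => ∑ i ∈ s, f i p) := by
  classical
  induction s using Finset.induction_on with
  | empty => simpa using WP.mono (Nat.zero_le d) (.const 0)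
  | insert a s ha ih =>
    simp only [Finset.sum_insert ha]
    exact (h a).add ih

lemma WP.Vx (j : Fin (μ + ν + 1)) (i : Fin μ) :
    ∃ g, WP μ ν 1 g ∧ ∀ p : Pt μ ν, 0 < p.2.2 → (V Jm j p).1 i = g p := by
  unfold V
  split_ifs with h0 hm
  · exact ⟨_, .mono zero_le_one (.const 0), fun p _ => rfl⟩
  · refine ⟨_, .smul ((Pi.single (⟨(j : ℕ) - 1, by omega⟩ : Fin μ) 1 : Fin μ → ℝ) i) .sqrt,
      fun p _ => ?_⟩
    simp [mul_comm]
  · exact ⟨_, .mono zero_le_one (.const 0), fun p _ => rfl⟩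

lemma WP.Vz (j : Fin (μ + ν + 1)) (k : Fin ν) :
    ∃ g, WP μ ν 2 g ∧ ∀ p : Pt μ ν, 0 < p.2.2 → (V Jm j p).2.1 k = g p := by
  unfold V
  split_ifs with h0 hm
  · exact ⟨_, .mono zero_le_two (.const 0), fun p _ => rfl⟩
  · refine ⟨_, .mul .sqrt (.smul (1 / 2)
      (.sum Finset.univ fun l => .smul (Jm k ⟨(j : ℕ) - 1, by omega⟩ l) (.x l))), fun p _ => ?_⟩
    rfl
  · refine ⟨_, .smul ((Pi.single (⟨(j : ℕ) - μ - 1, by have := j.isLt; omega⟩ : Fin ν) 1 :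
      Fin ν → ℝ) k) (.mul .sqrt .sqrt), fun p hp => ?_⟩
    rw [Real.mul_self_sqrt hp.le]
    simp [mul_comm]

lemma V_a (j : Fin (μ + ν + 1)) (p : Pt μ ν) :
    (V Jm j p).2.2 = (if (j : ℕ) = 0 then 1 else 0) * p.2.2 := by
  unfold V
  split_ifs <;> simp

/-- The vector fields preserve the weighted degree. -/
lemma WP.deriv (j : Fin (μ + ν + 1)) {d f} (h : WP μ ν d f) :
    ∃ g, WP μ ν d g ∧ ∀ p : Pt μ ν, 0 < p.2.2 → XD Jm j f p (g p) := by
  induction h with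
  | const c => exact ⟨_, .const 0, fun p _ => XD.const c⟩
  | sqrt =>
    refine ⟨_, .smul ((if (j : ℕ) = 0 then 1 else 0) / 2) .sqrt, fun p hp => ?_⟩
    refine ((XD.a (Jm := Jm) (j := j)).comp (hasDerivAt_sqrt hp.ne')).congr_val ?_
    have h2 := Real.mul_self_sqrt hp.le
    have h1 := Real.sqrt_pos.2 hp
    rw [V_a]
    nth_rewrite 2 [← h2]
    field_simp
  | x i =>
    obtain ⟨g, hg, h⟩ := WP.Vx (Jm := Jm) j i
    exact ⟨g, hg, fun p hp => (XD.x i).congr_val (h p hp)⟩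
  | z k =>
    obtain ⟨g, hg, h⟩ := WP.Vz (Jm := Jm) j k
    exact ⟨g, hg, fun p hp => (XD.z k).congr_val (h p hp)⟩
  | @mul d e f g hf hg ih1 ih2 =>
    obtain ⟨f', hf', h1⟩ := ih1
    obtain ⟨g', hg', h2⟩ := ih2
    exact ⟨_, .add (.mul hf hg') (.mul hf' hg), fun p hp => (h1 p hp).mul (h2 p hp)⟩
  | add _ _ ih1 ih2 =>
    obtain ⟨f', hf', h1⟩ := ih1
    obtain ⟨g', hg', h2⟩ := ih2
    exact ⟨_, .add hf' hg', fun p hp => (h1 p hp).add (h2 p hp)⟩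
  | mono hde _ ih =>
    obtain ⟨f', hf', h1⟩ := ih
    exact ⟨_, .mono hde hf', h1⟩

/-- `a + 1 + |x|²/4`. -/
def sx (p : Pt μ ν) : ℝ := p.2.2 + 1 + (∑ i, p.1 i ^ 2) / 4

/-- `|z|²`. -/
def zz (p : Pt μ ν) : ℝ := ∑ k, p.2.1 k ^ 2

/-- A homogeneous gauge: `|√a| ≤ N`, `|x| ≤ 2N`, `|z| ≤ N²` and `1 ≤ N`. -/
def NN (p : Pt μ ν) : ℝ := √(sx p + √(zz p))

lemma zz_nonneg (p : Pt μ ν) : 0 ≤ zz p := Finset.sum_nonneg fun _ _ => sq_nonneg _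

lemma sx_ge (p : Pt μ ν) : p.2.2 + 1 ≤ sx p := by
  have : 0 ≤ ∑ i, p.1 i ^ 2 := Finset.sum_nonneg fun _ _ => sq_nonneg _
  unfold sx
  linarith

/-- Every monomial is dominated by the power of the gauge given by its weight. -/
lemma WP.bound {d f} (h : WP μ ν d f) :
    ∃ C, 0 ≤ C ∧ ∀ p : Pt μ ν, 0 < p.2.2 → |f p| ≤ C * NN p ^ d := by
  have hN : ∀ p : Pt μ ν, 0 < p.2.2 → 1 ≤ NN p := by
    intro p hp
    have := sx_ge p
    have := Real.sqrt_nonneg (zz p)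
    exact Real.one_le_sqrt.2 (by linarith)
  have hN0 : ∀ p : Pt μ ν, 0 ≤ NN p := fun p => Real.sqrt_nonneg _
  induction h with
  | const c => exact ⟨|c|, abs_nonneg c, fun p _ => by simp⟩
  | sqrt =>
    refine ⟨1, zero_le_one, fun p hp => ?_⟩
    rw [abs_of_nonneg (Real.sqrt_nonneg _), one_mul, pow_one]
    apply Real.sqrt_le_sqrt
    have := sx_ge p
    have := Real.sqrt_nonneg (zz p)
    linarith
  | x i =>
    refine ⟨2, zero_le_two, fun p hp => ?_⟩
    have h1 : p.1 i ^ 2 ≤ ∑ i, p.1 i ^ 2 :=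
      Finset.single_le_sum (f := fun i => p.1 i ^ 2) (fun _ _ => sq_nonneg _) (Finset.mem_univ i)
    have h2 : p.1 i ^ 2 ≤ 4 * (sx p + √(zz p)) := by
      have := Real.sqrt_nonneg (zz p)
      unfold sx
      linarith
    have h3 := Real.abs_le_sqrt h2
    rw [Real.sqrt_mul (by norm_num), show √(4:ℝ) = 2 by
      rw [show (4:ℝ) = 2 ^ 2 by norm_num]; exact Real.sqrt_sq (by norm_num)] at h3
    simpa [NN] using h3
  | z k =>
    refine ⟨1, zero_le_one, fun p hp => ?_⟩
    have h1 : p.2.1 k ^ 2 ≤ zz p :=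
      Finset.single_le_sum (f := fun i => p.2.1 i ^ 2) (fun _ _ => sq_nonneg _) (Finset.mem_univ k)
    have h2 := sx_ge p
    have := Real.sqrt_nonneg (zz p)
    rw [one_mul, NN, Real.sq_sqrt (by linarith)]
    have := Real.abs_le_sqrt h1
    linarith
  | mul _ _ ih1 ih2 =>
    obtain ⟨C, hC, h1⟩ := ih1
    obtain ⟨C', hC', h2⟩ := ih2
    refine ⟨C * C', by positivity, fun p hp => ?_⟩
    rw [abs_mul, pow_add]
    have := hN0 p
    calc _ ≤ _ := mul_le_mul (h1 p hp) (h2 p hp) (abs_nonneg _) (by positivity)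
      _ = _ := by ring
  | add _ _ ih1 ih2 =>
    obtain ⟨C, hC, h1⟩ := ih1
    obtain ⟨C', hC', h2⟩ := ih2
    refine ⟨C + C', by positivity, fun p hp => ?_⟩
    rw [add_mul]
    exact (abs_add_le _ _).trans (add_le_add (h1 p hp) (h2 p hp))
  | mono hde _ ih =>
    obtain ⟨C, hC, h1⟩ := ih
    refine ⟨C, hC, fun p hp => (h1 p hp).trans ?_⟩
    exact mul_le_mul_of_nonneg_left (pow_le_pow_right₀ (hN p hp) hde) hC

/-- The function `cosh r` on the group. -/
def W (p : Pt μ ν) : ℝ := 2 * coshExpr μ ν p - 1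

/-- `2 a (cosh r + 1) = (a + 1 + |x|²/4)² + |z|²`. -/
lemma W_eq (p : Pt μ ν) (hp : 0 < p.2.2) :
    W p = (sx p * sx p + zz p) * (2 * p.2.2)⁻¹ + -1 := by
  have h1 := Real.sqrt_pos.2 hp
  have h2 := Real.sq_sqrt hp.le
  unfold W coshExpr
  rw [show ∑ i, p.2.1 i ^ 2 = zz p from rfl,
    show ∑ i, p.1 i ^ 2 = 4 * (sx p - p.2.2 - 1) by unfold sx; ring]
  generalize sx p = s at *
  generalize zz p = z at *
  have e : (√p.2.2 + (√p.2.2)⁻¹) / 2 + (√p.2.2)⁻¹ * (4 * (s - p.2.2 - 1)) / 8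
      = s / (2 * √p.2.2) := by
    field_simp
    rw [h2]
    ring
  rw [e, div_pow, mul_pow, h2]
  field_simp
  ring

/-- Functions of the form `g / a` with `g` of weighted degree at most four. -/
def WQ (f : Pt μ ν → ℝ) : Prop := ∃ g, WP μ ν 4 g ∧ ∀ p : Pt μ ν, 0 < p.2.2 → f p = g p * (p.2.2)⁻¹

lemma a_nhds {p : Pt μ ν} (hp : 0 < p.2.2) : ∀ᶠ q : Pt μ ν in 𝓝 p, 0 < q.2.2 :=
  (continuous_snd.comp continuous_snd).continuousAt.eventually (Ioi_mem_nhds hp)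

lemma WQ.W : WQ (W : Pt μ ν → ℝ) := by
  have hS : WP μ ν 2 (fun p => (√p.2.2 * √p.2.2 + 1) + 1 / 4 * ∑ i, p.1 i * p.1 i) :=
    .add (.add (.mul .sqrt .sqrt) (.mono zero_le_two (.const 1)))
      (.smul _ (.sum _ fun i => .mul (.x i) (.x i)))
  refine ⟨_, .add (.smul (1 / 2) (.add (.mul hS hS) (.sum Finset.univ fun k => .mul (.z k) (.z k))))
    (.smul (-1) (.mono (e := 4) (by norm_num) (.mul .sqrt .sqrt))), fun p hp => ?_⟩
  rw [W_eq p hp, Real.mul_self_sqrt hp.le]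
  simp only [sx, zz, ← pow_two]
  field_simp

/-- `X_j` preserves the form `g / a`, as `X_j a⁻¹` is a multiple of `a⁻¹`. -/
lemma WQ.step (j : Fin (μ + ν + 1)) {f : Pt μ ν → ℝ} (h : WQ f) :
    WQ (Xf μ ν Jm j f) ∧ ∀ p : Pt μ ν, 0 < p.2.2 → XD Jm j f p (Xf μ ν Jm j f p) := by
  obtain ⟨g, hg, e⟩ := h
  obtain ⟨g', hg', h'⟩ := hg.deriv (Jm := Jm) j
  have key : ∀ p : Pt μ ν, 0 < p.2.2 → XD Jm j f p
      ((g' p + (-(if (j : ℕ) = 0 then 1 else 0)) * g p) * (p.2.2)⁻¹) := by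
    intro p hp
    refine (((h' p hp).mul (XD.a.comp (hasDerivAt_inv hp.ne'))).congr_val ?_).congr
      ((a_nhds hp).mono fun q hq => e q hq)
    rw [V_a]
    field_simp
    ring
  refine ⟨⟨_, hg'.add (hg.smul (-(if (j : ℕ) = 0 then 1 else 0))), fun p hp => (key p hp).Xf_eq⟩,
    fun p hp => ?_⟩
  rw [(key p hp).Xf_eq]
  exact key p hp

lemma WQ.XL (I : List (Fin (μ + ν + 1))) : WQ (XL μ ν Jm I DR.W) := by
  induction I with
  | nil => exact WQ.W
  | cons j I ih => exact (WQ.step j ih).1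

/-- `cosh r` is comparable to `N⁴ / a`, which dominates every function `g / a` of this form. -/
lemma WQ.bound {f : Pt μ ν → ℝ} (h : WQ f) :
    ∃ C, 0 ≤ C ∧ ∀ p : Pt μ ν, 0 < p.2.2 → 1 < DR.W p → |f p| ≤ C * DR.W p := by
  obtain ⟨g, hg, e⟩ := h
  obtain ⟨C, hC, hb⟩ := hg.bound
  refine ⟨C * 8, by positivity, fun p hp hW => ?_⟩
  have h1 := sx_ge p
  have h2 := zz_nonneg p
  have h3 := Real.sqrt_nonneg (zz p)
  have h4 := Real.sq_sqrt h2
  have hN : NN p ^ 4 ≤ 8 * p.2.2 * DR.W p := by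
    have e1 : NN p ^ 4 = (sx p + √(zz p)) ^ 2 := by
      rw [show NN p ^ 4 = (NN p ^ 2) ^ 2 by ring, NN, Real.sq_sqrt (by linarith)]
    have e2 : sx p * sx p + zz p = 2 * p.2.2 * (DR.W p + 1) := by
      rw [W_eq p hp]; field_simp; ring
    rw [e1]
    nlinarith [sq_nonneg (sx p - √(zz p))]
  rw [e p hp, abs_mul, abs_of_pos (inv_pos.2 hp)]
  calc |g p| * (p.2.2)⁻¹ ≤ C * (8 * p.2.2 * DR.W p) * (p.2.2)⁻¹ := by
        have := hb p hp
        have h5 : |g p| ≤ C * (8 * p.2.2 * DR.W p) := this.trans (by gcongr)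
        gcongr
    _ = _ := by field_simp

end Fields

/-! ### Bounds for the derivatives of `cosh r` -/

section Geometry
variable {μ ν : ℕ} {Jm : Fin ν → Matrix (Fin μ) (Fin μ) ℝ}

lemma XD.W (j : Fin (μ + ν + 1)) (p : Pt μ ν) (hp : 0 < p.2.2) :
    XD Jm j DR.W p
      ((2 * sx p * ((V Jm j p).2.2 + (∑ i, p.1 i * (V Jm j p).1 i) / 2) +
        2 * ∑ k, p.2.1 k * (V Jm j p).2.1 k) * (2 * p.2.2)⁻¹
        - (sx p * sx p + zz p) * (2 * p.2.2)⁻¹ * (V Jm j p).2.2 * (p.2.2)⁻¹) := by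
  have hs : XD Jm j sx p ((V Jm j p).2.2 + (∑ i, p.1 i * (V Jm j p).1 i) / 2) := by
    have h := ((XD.a (Jm := Jm) (j := j) (p := p)).add (XD.const 1)).add
      (XD.comp (φ := fun s => s / 4) ((hasDerivAt_id _).div_const 4)
        (XD.sum Finset.univ fun i _ => XD.comp (hasDerivAt_pow 2 _) (XD.x i)))
    refine h.congr_val ?_
    simp only [Finset.sum_div, Finset.mul_sum, add_zero]
    congr 1
    refine Finset.sum_congr rfl fun i _ => ?_
    simp
    ring
  have hz : XD Jm j zz p (2 * ∑ k, p.2.1 k * (V Jm j p).2.1 k) := by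
    refine (XD.sum Finset.univ fun i _ => XD.comp (hasDerivAt_pow 2 _) (XD.z i)).congr_val ?_
    simp only [Finset.mul_sum]
    refine Finset.sum_congr rfl fun i _ => ?_
    simp
    ring
  have hi : XD Jm j (fun q => (2 * q.2.2)⁻¹) p
      (-(2 * p.2.2)⁻¹ * (p.2.2)⁻¹ * (V Jm j p).2.2) := by
    have h1 : HasDerivAt (fun s : ℝ => (2 * s)⁻¹) (-(2 * p.2.2)⁻¹ * (p.2.2)⁻¹) p.2.2 := by
      have := ((hasDerivAt_id p.2.2).const_mul 2).fun_inv (by simpa using hp.ne')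
      refine this.congr_deriv ?_
      simp
      field_simp
    exact XD.comp (φ := fun s : ℝ => (2 * s)⁻¹) h1 XD.a
  refine (((((hs.mul hs).add hz).mul hi).add (XD.const (-1))).congr_val ?_).congr
    ((a_nhds hp).mono fun q hq => W_eq q hq)
  ring

set_option maxHeartbeats 1000000 in
/-- Near the identity the first derivatives of `cosh r` vanish to first order. -/
lemma Xf_W_bound (j : Fin (μ + ν + 1)) :
    ∃ C, 0 ≤ C ∧ ∀ p : Pt μ ν, 0 < p.2.2 → 1 < W p → W p ≤ 2 →
      |Xf μ ν Jm j W p| ≤ C * √(W p - 1) := by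
  refine ⟨200 + 100 * ∑ k, ∑ i, ∑ l, |Jm k i l|, by positivity, fun p hp h1 h2 => ?_⟩
  rw [(XD.W j p hp).Xf_eq]
  set δ := W p - 1 with hδ
  set η := √δ with hη
  have hδ0 : 0 < δ := by linarith
  have hη2 : η ^ 2 = δ := Real.sq_sqrt hδ0.le
  have hη0 : 0 < η := Real.sqrt_pos.2 hδ0
  have hη1 : η ≤ 1 := by nlinarith
  set a := p.2.2 with ha
  set X := ∑ i, p.1 i ^ 2 with hX
  have hX0 : 0 ≤ X := Finset.sum_nonneg fun _ _ => sq_nonneg _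
  have hz0 := zz_nonneg p
  have hs : sx p = a + 1 + X / 4 := rfl
  -- a sum of non-negative terms, each of which is therefore at most `2 a δ`
  have hW : 2 * a * δ = (a - 1) ^ 2 + (a + 1) * X / 2 + X ^ 2 / 16 + zz p := by
    rw [hδ, W_eq p hp, hs, ← ha]
    field_simp
    ring
  have ha4 : a ≤ 4 := by nlinarith [mul_nonneg hp.le hX0]
  have ha1 : 1 / 4 ≤ a := by nlinarith [mul_nonneg hp.le hX0]
  have b1 : |a - 1| ≤ 3 * η := by
    apply abs_le_of_sq_le_sq _ (by positivity)
    nlinarith [mul_nonneg hp.le hX0]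
  have b2 : X ≤ 4 * δ := by
    by_contra! h
    nlinarith [mul_lt_mul_of_pos_left h hp]
  have b3 : zz p ≤ 8 * δ := by nlinarith [mul_nonneg hp.le hX0]
  have bx : ∀ i, |p.1 i| ≤ 2 * η := by
    intro i
    have h1 : p.1 i ^ 2 ≤ X :=
      Finset.single_le_sum (f := fun i => p.1 i ^ 2) (fun _ _ => sq_nonneg _) (Finset.mem_univ i)
    apply abs_le_of_sq_le_sq _ (by positivity)
    nlinarith
  have bz : ∀ k, |p.2.1 k| ≤ 3 * η := by
    intro k
    have h1 : p.2.1 k ^ 2 ≤ zz p :=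
      Finset.single_le_sum (f := fun i => p.2.1 i ^ 2) (fun _ _ => sq_nonneg _) (Finset.mem_univ k)
    apply abs_le_of_sq_le_sq _ (by positivity)
    nlinarith
  have hs6 : sx p ≤ 6 := by rw [hs]; linarith
  have hs0 : 0 ≤ sx p := by rw [hs]; positivity
  have hδη : δ ≤ η := by nlinarith
  have hM : 0 ≤ ∑ k, ∑ i, ∑ l, |Jm k i l| := by positivity
  have hinv : (2 * a)⁻¹ ≤ 2 := by
    rw [inv_le_comm₀ (by positivity) (by norm_num)]; linarith
  have hfin : ∀ y : ℝ, |y| ≤ (50 + 50 * ∑ k, ∑ i, ∑ l, |Jm k i l|) * η →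
      |y * (2 * a)⁻¹| ≤ (200 + 100 * ∑ k, ∑ i, ∑ l, |Jm k i l|) * η := by
    intro y hy
    rw [abs_mul, abs_of_pos (by positivity : 0 < (2 * a)⁻¹)]
    calc |y| * (2 * a)⁻¹ ≤ ((50 + 50 * ∑ k, ∑ i, ∑ l, |Jm k i l|) * η) * 2 := by gcongr
      _ ≤ _ := by nlinarith [mul_nonneg hM hη0.le]
  unfold V
  split_ifs with c0 cm
  -- the vector field `a ∂_a`
  · have e : (2 * sx p * (a + (∑ i, p.1 i * (0 : Fin μ → ℝ) i) / 2) +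
        2 * ∑ k, p.2.1 k * (0 : Fin ν → ℝ) k) * (2 * a)⁻¹
        - (sx p * sx p + zz p) * (2 * a)⁻¹ * a * a⁻¹
        = (sx p * (a - 1 - X / 4) - zz p) * (2 * a)⁻¹ := by
      simp only [Pi.zero_apply, mul_zero, Finset.sum_const_zero]
      rw [hs]
      field_simp
      ring
    dsimp only
    rw [← ha, e]
    apply hfin
    have h3 : |sx p * (a - 1 - X / 4)| ≤ 6 * (4 * η) := by
      rw [abs_mul, abs_of_nonneg hs0]
      refine mul_le_mul hs6 ?_ (abs_nonneg _) (by norm_num)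
      refine (abs_sub _ _).trans ?_
      rw [abs_of_nonneg (by positivity : 0 ≤ X / 4)]
      linarith
    refine (abs_sub _ _).trans ?_
    rw [abs_of_nonneg hz0]
    nlinarith [mul_nonneg hM hη0.le]
  -- the vector fields in the direction of `x`
  · set i0 : Fin μ := ⟨(j : ℕ) - 1, by omega⟩ with hi0
    dsimp only
    have e1 : ∑ i, p.1 i * (√a • (Pi.single i0 1 : Fin μ → ℝ)) i = √a * p.1 i0 := by
      simp [Pi.single_apply, mul_comm]
    have e2 : ∑ k, p.2.1 k * (√a * (1 / 2 * (Jm k).mulVec p.1 i0))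
        = √a / 2 * ∑ k, p.2.1 k * (Jm k).mulVec p.1 i0 := by
      rw [Finset.mul_sum]
      exact Finset.sum_congr rfl fun k _ => by ring
    rw [← ha, e1, e2]
    have e3 : (2 * sx p * (0 + √a * p.1 i0 / 2) +
        2 * (√a / 2 * ∑ k, p.2.1 k * (Jm k).mulVec p.1 i0)) * (2 * a)⁻¹
        - (sx p * sx p + zz p) * (2 * a)⁻¹ * 0 * a⁻¹
        = √a * (sx p * p.1 i0 + ∑ k, p.2.1 k * (Jm k).mulVec p.1 i0) * (2 * a)⁻¹ := by ring
    rw [e3]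
    apply hfin
    have hsa : √a ≤ 2 := by
      rw [Real.sqrt_le_left (by norm_num)]; linarith
    have h3 : |sx p * p.1 i0| ≤ 6 * (2 * η) := by
      rw [abs_mul, abs_of_nonneg hs0]
      exact mul_le_mul hs6 (bx i0) (abs_nonneg _) (by norm_num)
    have h4 : |∑ k, p.2.1 k * (Jm k).mulVec p.1 i0| ≤
        6 * η * ∑ k, ∑ i, ∑ l, |Jm k i l| := by
      refine (Finset.abs_sum_le_sum_abs _ _).trans ?_
      rw [Finset.mul_sum]
      refine Finset.sum_le_sum fun k _ => ?_
      have h5 : |(Jm k).mulVec p.1 i0| ≤ 2 * ∑ i, ∑ l, |Jm k i l| := by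
        calc |(Jm k).mulVec p.1 i0| = |∑ l, Jm k i0 l * p.1 l| := rfl
          _ ≤ ∑ l, |Jm k i0 l * p.1 l| := Finset.abs_sum_le_sum_abs _ _
          _ ≤ ∑ l, 2 * |Jm k i0 l| := by
              refine Finset.sum_le_sum fun l _ => ?_
              rw [abs_mul, mul_comm]
              have := bx l
              gcongr
              linarith
          _ = 2 * ∑ l, |Jm k i0 l| := by rw [Finset.mul_sum]
          _ ≤ _ := by
              have := Finset.single_le_sum (f := fun i => ∑ l, |Jm k i l|)
                (fun i _ => Finset.sum_nonneg fun _ _ => abs_nonneg _) (Finset.mem_univ i0)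
              linarith
      rw [abs_mul]
      calc _ ≤ (3 * η) * (2 * ∑ i, ∑ l, |Jm k i l|) :=
            mul_le_mul (bz k) h5 (abs_nonneg _) (by positivity)
        _ = _ := by ring
    rw [abs_mul, abs_of_nonneg (Real.sqrt_nonneg a)]
    calc √a * |sx p * p.1 i0 + ∑ k, p.2.1 k * (Jm k).mulVec p.1 i0|
        ≤ 2 * (6 * (2 * η) + 6 * η * ∑ k, ∑ i, ∑ l, |Jm k i l|) := by
          refine mul_le_mul hsa ?_ (abs_nonneg _) (by norm_num)
          exact (abs_add_le _ _).trans (add_le_add h3 h4)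
      _ ≤ _ := by nlinarith [mul_nonneg hM hη0.le]
  -- the vector fields in the direction of `z`
  · set k0 : Fin ν := ⟨(j : ℕ) - μ - 1, by have := j.isLt; omega⟩ with hk0
    dsimp only
    have e1 : ∑ k, p.2.1 k * (a • (Pi.single k0 1 : Fin ν → ℝ)) k = a * p.2.1 k0 := by
      simp [Pi.single_apply, mul_comm]
    rw [← ha, e1]
    have e3 : (2 * sx p * (0 + (∑ i, p.1 i * (0 : Fin μ → ℝ) i) / 2) + 2 * (a * p.2.1 k0)) *
        (2 * a)⁻¹ - (sx p * sx p + zz p) * (2 * a)⁻¹ * 0 * a⁻¹ = 2 * a * p.2.1 k0 * (2 * a)⁻¹ := by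
      simp only [Pi.zero_apply, mul_zero, Finset.sum_const_zero]
      ring
    rw [e3]
    apply hfin
    rw [abs_mul, abs_of_pos (by positivity)]
    calc 2 * a * |p.2.1 k0| ≤ 2 * 4 * (3 * η) := by
          have := bz k0
          gcongr
      _ ≤ _ := by nlinarith [mul_nonneg hM hη0.le]

/-- `Ψ̃` is submultiplicative in the order. -/
lemma PsiT_mul (k l : ℕ) {r t : ℝ} (hr : 0 < r) (ht : 0 < t) :
    PsiT k r t * PsiT l r t ≤ PsiT (k + l) r t := by
  have hsq := Real.sqrt_pos.2 ht
  unfold PsiT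
  have hR1 : 1 ≤ 1 + r / t := by
    have : 0 ≤ r / t := by positivity
    linarith
  have hPR : 1 + r / t ≤ 1 + 1 / √t + r / t := by
    have : 0 ≤ 1 / √t := by positivity
    linarith
  generalize 1 + 1 / √t + r / t = P at *
  generalize 1 + r / t = R at *
  have hP : 1 ≤ P := hR1.trans hPR
  by_cases h : 1 < r
  · simp [h, pow_add]
  simp only [h, false_or]
  rcases Nat.even_or_odd k with hk | hk <;> rcases Nat.even_or_odd l with hl | hl
  · simp [hk, hl, hk.add hl, pow_add]
  · have hl' := Nat.not_even_iff_odd.2 hl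
    have hkl := Nat.not_even_iff_odd.2 (hk.add_odd hl)
    obtain ⟨l, rfl⟩ := Nat.exists_eq_succ_of_ne_zero hl.pos.ne'
    rw [if_pos hk, if_neg hl', if_neg hkl]
    simp only [Nat.succ_eq_add_one, Nat.add_sub_cancel, ← add_assoc, pow_add]
    linarith
  · have hk' := Nat.not_even_iff_odd.2 hk
    have hkl := Nat.not_even_iff_odd.2 (hk.add_even hl)
    obtain ⟨k, rfl⟩ := Nat.exists_eq_succ_of_ne_zero hk.pos.ne'
    rw [if_pos hl, if_neg hk', if_neg hkl]
    rw [show k.succ + l - 1 = k + l by omega, show k.succ - 1 = k by omega, pow_add]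
    linarith
  · have hk' := Nat.not_even_iff_odd.2 hk
    have hl' := Nat.not_even_iff_odd.2 hl
    obtain ⟨k, rfl⟩ := Nat.exists_eq_succ_of_ne_zero hk.pos.ne'
    obtain ⟨l, rfl⟩ := Nat.exists_eq_succ_of_ne_zero hl.pos.ne'
    rw [if_neg hl', if_neg hk', if_pos (hk.add_odd hl)]
    simp only [Nat.succ_eq_add_one, Nat.add_sub_cancel]
    calc P ^ k * R * (P ^ l * R) ≤ P ^ k * P * (P ^ l * P) := by gcongr
      _ = _ := by ring

lemma PsiT_nonneg (k : ℕ) {r t : ℝ} (hr : 0 < r) (ht : 0 < t) : 0 ≤ PsiT k r t := by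
  have := Real.sqrt_pos.2 ht
  unfold PsiT
  split_ifs <;> positivity

/-- A derivative of `cosh r` of order `|I| ≥ 1`, paired with one factor `Phi`, costs at most
`PsiT |I|`. -/
lemma factor_bound (I : List (Fin (μ + ν + 1))) (hI : I ≠ []) :
    ∃ C, 0 ≤ C ∧ ∀ t, 0 < t → ∀ p : Pt μ ν, 0 < p.2.2 → 1 < W p →
      Phi t (arcosh (W p)) * |XL μ ν Jm I W p| ≤ C * PsiT I.length (arcosh (W p)) t := by
  obtain ⟨C, hC, hb⟩ := (WQ.XL (Jm := Jm) I).bound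
  -- away from the identity, and for orders at least two, the bound by `cosh r` is enough
  have main : ∀ t, 0 < t → ∀ p : Pt μ ν, 0 < p.2.2 → 1 < W p →
      (1 < arcosh (W p) ∨ 2 ≤ I.length) →
      Phi t (arcosh (W p)) * |XL μ ν Jm I W p| ≤ (2 * C) * PsiT I.length (arcosh (W p)) t := by
    intro t ht p hp hW h
    have hr := arcosh_pos hW
    have hcr := cosh_arcosh hW.le
    have hbp := hb p hp hW
    set r := arcosh (W p) with hrdef
    have h1 : Phi t r * |XL μ ν Jm I W p| ≤ C * (1 + (1 + r) / t) := by
      calc _ ≤ Phi t r * (C * W p) := by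
            have := Phi_nonneg ht hr.le
            gcongr
        _ = _ := by
            unfold Phi
            rw [hcr]
            field_simp
    refine h1.trans ?_
    have hsq := Real.sqrt_pos.2 ht
    have hsq2 := Real.sq_sqrt ht.le
    have hR0 : 0 ≤ r / t := by positivity
    have hS0 : 0 ≤ 1 / √t := by positivity
    have hS2 : 1 / t = (1 / √t) ^ 2 := by rw [div_pow, hsq2, one_pow]
    have hP : 1 ≤ 1 + 1 / √t + r / t := by linarith
    have hlen : 1 ≤ I.length := List.length_pos_iff.2 hI
    have key : 1 + (1 + r) / t ≤ 2 * PsiT I.length r t := by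
      by_cases hr1 : 1 < r
      · unfold PsiT
        rw [if_pos (Or.inl hr1)]
        have h2 : (1 + r) / t ≤ 2 * (r / t) := by
          rw [← mul_div_assoc]
          gcongr
          linarith
        have h3 : (1 + 1 / √t + r / t) ^ 1 ≤ (1 + 1 / √t + r / t) ^ I.length :=
          pow_le_pow_right₀ hP hlen
        rw [pow_one] at h3
        linarith
      · have h2l : 2 ≤ I.length := h.resolve_left hr1
        have h2 : (1 + r) / t ≤ 2 * (1 / t) := by
          rw [← mul_div_assoc]
          gcongr
          linarith
        have h3 : 1 + 2 * (1 / t) ≤ 2 * (1 + 1 / √t + r / t) ^ 2 := by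
          rw [hS2]
          nlinarith [mul_nonneg hR0 hS0]
        have h4 : (1 + 1 / √t + r / t) ^ 2 ≤ PsiT I.length r t := by
          unfold PsiT
          split_ifs with hc
          · exact pow_le_pow_right₀ hP h2l
          · have ho : Odd I.length := Nat.not_even_iff_odd.1 fun he => hc (Or.inr he)
            have h3l : 2 ≤ I.length - 1 := by
              obtain ⟨m, hm⟩ := ho
              omega
            have := pow_le_pow_right₀ hP h3l
            refine this.trans (le_mul_of_one_le_right (by positivity) (by linarith))
        linarith
    calc C * (1 + (1 + r) / t) ≤ C * (2 * PsiT I.length r t) := by gcongr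
      _ = _ := by ring
  rcases I with _ | ⟨j, _ | ⟨j', I⟩⟩
  · exact absurd rfl hI
  · obtain ⟨C', hC', hb'⟩ := Xf_W_bound (Jm := Jm) j
    refine ⟨2 * C + 2 * C', by positivity, fun t ht p hp hW => ?_⟩
    have hr := arcosh_pos hW
    have hcr := cosh_arcosh hW.le
    have hPs := PsiT_nonneg [j].length hr ht
    by_cases hr1 : 1 < arcosh (W p)
    · refine (main t ht p hp hW (Or.inl hr1)).trans ?_
      gcongr
      linarith
    · have hr1 := not_lt.1 hr1
      -- `cosh r - 1 ≤ r ^ 2` for `r ≤ 1`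
      have hd : W p - 1 ≤ arcosh (W p) ^ 2 := by
        have h1 := cosh_le_exp_half_sq (arcosh (W p))
        rw [hcr] at h1
        have h2 := abs_exp_sub_one_le (x := arcosh (W p) ^ 2 / 2) (by
          rw [abs_of_nonneg (by positivity)]; nlinarith)
        rw [abs_of_nonneg (a := arcosh (W p) ^ 2 / 2) (by positivity)] at h2
        have := le_abs_self (exp (arcosh (W p) ^ 2 / 2) - 1)
        linarith
      have hb2 := hb' p hp hW (by nlinarith)
      have hd2 : √(W p - 1) ≤ arcosh (W p) := Real.sqrt_le_left hr.le |>.2 hd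
      set r := arcosh (W p) with hrdef
      have hx : |XL μ ν Jm [j] W p| ≤ C' * r := by
        refine hb2.trans ?_
        gcongr
      have hPhi : Phi t r ≤ 1 + 2 / t := by
        unfold Phi
        have h1 : 1 / cosh r ≤ 1 := by
          rw [div_le_one (cosh_pos r)]; exact one_le_cosh r
        calc _ ≤ 1 * (1 + (1 + 1) / t) := by gcongr
          _ = _ := by norm_num
      have hval : PsiT [j].length r t = 1 + r / t := by
        simp [PsiT, not_lt.2 hr1]
      rw [hval] at hPs ⊢
      have hPn := Phi_nonneg ht hr.le
      calc _ ≤ (1 + 2 / t) * (C' * r) := by gcongr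
        _ = C' * (r + 2 * (r / t)) := by ring
        _ ≤ C' * (2 * (1 + r / t)) := by
            gcongr
            linarith
        _ ≤ _ := by nlinarith [mul_nonneg hC hPs]
  · exact ⟨2 * C, by positivity, fun t ht p hp hW => main t ht p hp hW (Or.inr (by simp))⟩

end Geometry

/-! ### The chain rule -/

section ChainRule
variable {μ ν : ℕ} {Jm : Fin ν → Matrix (Fin μ) (Fin μ) ℝ}

/-- Sums of signed products of `m` factors `X_I cosh r` with `I ≠ ∅`, of total order `k`. -/
inductive PC (Jm : Fin ν → Matrix (Fin μ) (Fin μ) ℝ) : ℕ → ℕ → (Pt μ ν → ℝ) → Prop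
  | one : PC Jm 0 0 (fun _ => 1)
  | zero (m k) : PC Jm m k (fun _ => 0)
  | mul {m k n A} (I : List (Fin (μ + ν + 1))) : I ≠ [] → n = k + I.length → PC Jm m k A →
      PC Jm (m + 1) n (fun p => A p * XL μ ν Jm I W p)
  | add {m k A B} : PC Jm m k A → PC Jm m k B → PC Jm m k (fun p => A p + B p)
  | neg {m k A} : PC Jm m k A → PC Jm m k (fun p => -A p)

/-- Leibniz rule: differentiation keeps the number of factors and raises the order by one. -/
lemma PC.deriv (j : Fin (μ + ν + 1)) {m k : ℕ} {A : Pt μ ν → ℝ} (h : PC Jm m k A) :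
    ∃ A', PC Jm m (k + 1) A' ∧ ∀ p : Pt μ ν, 0 < p.2.2 → XD Jm j A p (A' p) := by
  induction h with
  | one => exact ⟨_, .zero _ _, fun p _ => XD.const 1⟩
  | zero m k => exact ⟨_, .zero _ _, fun p _ => XD.const 0⟩
  | @mul m k n A I hI hn hA ih =>
    obtain ⟨A', hA', h'⟩ := ih
    refine ⟨_, .add (.mul (j :: I) (by simp) (by simp; omega) hA) (.mul I hI (by omega) hA'),
      fun p hp => ?_⟩
    exact (h' p hp).mul (((WQ.XL I).step j).2 p hp)
  | add _ _ ih1 ih2 =>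
    obtain ⟨A', hA, h1⟩ := ih1
    obtain ⟨B', hB, h2⟩ := ih2
    exact ⟨_, .add hA hB, fun p hp => (h1 p hp).add (h2 p hp)⟩
  | neg _ ih =>
    obtain ⟨A', hA, h1⟩ := ih
    exact ⟨_, .neg hA, fun p hp => (h1 p hp).neg⟩

/-- One weight `Phi` per factor turns a product of total order `k` into `PsiT k`. -/
lemma PC.bound {m k : ℕ} {A : Pt μ ν → ℝ} (h : PC Jm m k A) :
    ∃ C, 0 ≤ C ∧ ∀ t, 0 < t → ∀ p : Pt μ ν, 0 < p.2.2 → 1 < W p →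
      Phi t (arcosh (W p)) ^ m * |A p| ≤ C * PsiT k (arcosh (W p)) t := by
  induction h with
  | one => exact ⟨1, zero_le_one, fun t ht p hp hW => by simp [PsiT]⟩
  | zero m k =>
    refine ⟨0, le_rfl, fun t ht p hp hW => by simp⟩
  | @mul m k n A I hI hn hA ih =>
    obtain ⟨C, hC, h1⟩ := ih
    obtain ⟨C', hC', h2⟩ := factor_bound (Jm := Jm) I hI
    refine ⟨C * C', by positivity, fun t ht p hp hW => ?_⟩
    have hr := arcosh_pos hW
    have hPhi := Phi_nonneg ht hr.le
    have hP := PsiT_nonneg k hr ht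
    rw [abs_mul, hn]
    calc _ = (Phi t (arcosh (W p)) ^ m * |A p|) *
          (Phi t (arcosh (W p)) * |XL μ ν Jm I W p|) := by ring
      _ ≤ (C * PsiT k (arcosh (W p)) t) * (C' * PsiT I.length (arcosh (W p)) t) :=
          mul_le_mul (h1 t ht p hp hW) (h2 t ht p hp hW) (by positivity) (by positivity)
      _ = C * C' * (PsiT k (arcosh (W p)) t * PsiT I.length (arcosh (W p)) t) := by ring
      _ ≤ _ := by
          have := PsiT_mul k I.length hr ht
          gcongr
  | add _ _ ih1 ih2 =>
    obtain ⟨C, hC, h1⟩ := ih1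
    obtain ⟨C', hC', h2⟩ := ih2
    refine ⟨C + C', by positivity, fun t ht p hp hW => ?_⟩
    have hPhi := Phi_nonneg ht (arcosh_pos hW).le
    rw [add_mul]
    refine le_trans ?_ (add_le_add (h1 t ht p hp hW) (h2 t ht p hp hW))
    rw [← mul_add]
    exact mul_le_mul_of_nonneg_left (abs_add_le _ _) (by positivity)
  | neg _ ih => simpa only [abs_neg] using ih

/-- Sums of terms `F_m(cosh r) A` where `A` is a sum of products of `m` derivatives of `cosh r`,
of total order `k`. -/
inductive SC (Jm : Fin ν → Matrix (Fin μ) (Fin μ) ℝ) (F : ℕ → ℝ → ℝ → ℝ) :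
    ℕ → (ℝ → Pt μ ν → ℝ) → Prop
  | mk {m k A} : PC Jm m k A → SC Jm F k (fun t p => F m t (W p) * A p)
  | add {k f g} : SC Jm F k f → SC Jm F k g → SC Jm F k (fun t p => f t p + g t p)

/-- Differentiating `F m (cosh r)` produces `F (m + 1) (cosh r)` and one new factor of order one. -/
lemma SC.deriv {F : ℕ → ℝ → ℝ → ℝ} (hF : ∀ m, Step (F m) (F (m + 1)))
    (j : Fin (μ + ν + 1)) {k : ℕ} {f : ℝ → Pt μ ν → ℝ} (h : SC Jm F k f) :
    ∃ f', SC Jm F (k + 1) f' ∧ ∀ t, 0 < t → ∀ p : Pt μ ν, 0 < p.2.2 → 1 < W p →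
      XD Jm j (f t) p (f' t p) := by
  induction h with
  | @mk m k A hA =>
    obtain ⟨A', hA', h'⟩ := hA.deriv j
    refine ⟨_, .add (.mk hA') (.mk (.neg (.mul [j] (by simp) rfl hA))), fun t ht p hp hW => ?_⟩
    have h1 := XD.comp ((hF m).1 t (W p) ht hW) ((WQ.W (μ := μ) (ν := ν).step (Jm := Jm) j).2 p hp)
    refine (h1.mul (h' p hp)).congr_val ?_
    simp only [XL]
    ring
  | add _ _ ih1 ih2 =>
    obtain ⟨f', hf, h1⟩ := ih1
    obtain ⟨g', hg, h2⟩ := ih2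
    exact ⟨_, .add hf hg, fun t ht p hp hW => (h1 t ht p hp hW).add (h2 t ht p hp hW)⟩

/-- `F m ≤ C Phi ^ m F 0`, uniformly in `t`. -/
lemma Step.iterate {F : ℕ → ℝ → ℝ → ℝ} (hF : ∀ m, Step (F m) (F (m + 1))) (m : ℕ) :
    ∃ C, 0 ≤ C ∧ ∀ t w, 0 < t → 1 < w → F m t w ≤ C * Phi t (arcosh w) ^ m * F 0 t w := by
  induction m with
  | zero => exact ⟨1, zero_le_one, fun t w _ _ => by simp⟩
  | succ m ih =>
    obtain ⟨C, hC, h1⟩ := ih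
    obtain ⟨-, -, C', hC', h2⟩ := hF m
    refine ⟨C' * C, by positivity, fun t w ht hw => ?_⟩
    have hPhi := Phi_nonneg ht (arcosh_pos hw).le
    calc _ ≤ C' * Phi t (arcosh w) * F m t w := h2 t w ht hw
      _ ≤ C' * Phi t (arcosh w) * (C * Phi t (arcosh w) ^ m * F 0 t w) :=
          mul_le_mul_of_nonneg_left (h1 t w ht hw) (by positivity)
      _ = _ := by ring

lemma SC.bound {F : ℕ → ℝ → ℝ → ℝ} (hF : ∀ m, Step (F m) (F (m + 1)))
    {k : ℕ} {f : ℝ → Pt μ ν → ℝ} (h : SC Jm F k f) :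
    ∃ C, 0 ≤ C ∧ ∀ t, 0 < t → ∀ p : Pt μ ν, 0 < p.2.2 → 1 < W p →
      |f t p| ≤ C * PsiT k (arcosh (W p)) t * F 0 t (W p) := by
  induction h with
  | @mk m k A hA =>
    obtain ⟨C, hC, h1⟩ := hA.bound
    obtain ⟨C', hC', h2⟩ := Step.iterate hF m
    refine ⟨C' * C, by positivity, fun t ht p hp hW => ?_⟩
    have hF0 := (hF 0).2.1 t (W p) ht hW
    have hFm := (hF m).2.1 t (W p) ht hW
    have hPhi := Phi_nonneg ht (arcosh_pos hW).le
    rw [abs_mul, abs_of_nonneg hFm]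
    calc _ ≤ (C' * Phi t (arcosh (W p)) ^ m * F 0 t (W p)) * |A p| :=
          mul_le_mul_of_nonneg_right (h2 t _ ht hW) (abs_nonneg _)
      _ = C' * F 0 t (W p) * (Phi t (arcosh (W p)) ^ m * |A p|) := by ring
      _ ≤ C' * F 0 t (W p) * (C * PsiT k (arcosh (W p)) t) :=
          mul_le_mul_of_nonneg_left (h1 t ht p hp hW) (by positivity)
      _ = _ := by ring
  | add _ _ ih1 ih2 =>
    obtain ⟨C, hC, h1⟩ := ih1
    obtain ⟨C', hC', h2⟩ := ih2
    refine ⟨C + C', by positivity, fun t ht p hp hW => ?_⟩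
    rw [add_mul, add_mul]
    exact (abs_add_le _ _).trans (add_le_add (h1 t ht p hp hW) (h2 t ht p hp hW))

lemma W_nhds {p : Pt μ ν} (hp : 0 < p.2.2) (hW : 1 < W p) : ∀ᶠ q : Pt μ ν in 𝓝 p, 1 < W q := by
  obtain ⟨L, hL, -⟩ := (WQ.W (μ := μ) (ν := ν).step (Jm := 0) 0).2 p hp
  exact hL.continuousAt.eventually (Ioi_mem_nhds hW)

/-- On the punctured group, the iterated derivatives of a function agreeing with `F_0(cosh r)` are
of the form described by `SC`. -/
lemma SC.exists {F : ℕ → ℝ → ℝ → ℝ} (hF : ∀ m, Step (F m) (F (m + 1)))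
    {u : ℝ → Pt μ ν → ℝ}
    (hu : ∀ t, 0 < t → ∀ p : Pt μ ν, 0 < p.2.2 → 1 < W p → u t p = F 0 t (W p))
    (J : List (Fin (μ + ν + 1))) :
    ∃ f, SC Jm F J.length f ∧ ∀ t, 0 < t → ∀ p : Pt μ ν, 0 < p.2.2 → 1 < W p →
      XL μ ν Jm J (u t) p = f t p := by
  induction J with
  | nil => exact ⟨_, .mk .one, fun t ht p hp hW => by simp [XL, hu t ht p hp hW]⟩
  | cons j J ih =>
    obtain ⟨f, hf, h1⟩ := ih
    obtain ⟨f', hf', h2⟩ := hf.deriv hF j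
    refine ⟨f', hf', fun t ht p hp hW => ?_⟩
    refine ((h2 t ht p hp hW).congr ?_).Xf_eq
    filter_upwards [a_nhds hp, W_nhds hp hW] with q hq hWq using h1 t ht q hq hWq

end ChainRule

theorem space_derivative_bound (μ ν : ℕ) (hμ : Even μ) (hν : 1 ≤ ν)
    (Jm : Fin ν → Matrix (Fin μ) (Fin μ) ℝ)
    (hskew : ∀ k, (Jm k).transpose = -(Jm k))
    (hH : ∀ k l, Jm k * Jm l + Jm l * Jm k =
      if k = l then (-2 : ℝ) • (1 : Matrix (Fin μ) (Fin μ) ℝ) else 0)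
    (r : Pt μ ν → ℝ)
    (hr0 : ∀ p : Pt μ ν, 0 < p.2.2 → 0 ≤ r p)
    (hreq : ∀ p : Pt μ ν, 0 < p.2.2 → Real.cosh (r p / 2) ^ 2 = coshExpr μ ν p)
    (k : ℕ) :
    ∃ C : ℝ, 0 < C ∧ ∀ J : List (Fin (μ + ν + 1)), J.length = k →
      ∀ t : ℝ, 0 < t → ∀ p : Pt μ ν, 0 < p.2.2 → 0 < r p →
        |XL μ ν Jm J (fun q => heat μ ν t (r q)) p| ≤ C * PsiT k (r p) t * heat μ ν t (r p) := by
  obtain ⟨F, hheat, hF⟩ := heat_seq μ ν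
  have hcosh : ∀ p : Pt μ ν, 0 < p.2.2 → cosh (r p) = W p := by
    intro p hp
    have h1 := cosh_two_mul (r p / 2)
    have h2 := cosh_sq (r p / 2)
    rw [show 2 * (r p / 2) = r p by ring] at h1
    unfold W
    linarith [hreq p hp]
  have hu : ∀ t, 0 < t → ∀ p : Pt μ ν, 0 < p.2.2 → 1 < W p →
      heat μ ν t (r p) = F 0 t (W p) := by
    intro t ht p hp hW
    rw [← hcosh p hp] at hW ⊢
    have hr : r p ≠ 0 := one_lt_cosh.1 hW
    exact hheat t (r p) ht (lt_of_le_of_ne (hr0 p hp) hr.symm)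
  have hJ : ∀ J : List (Fin (μ + ν + 1)), ∃ C : ℝ, 0 ≤ C ∧ ∀ t : ℝ, 0 < t → ∀ p : Pt μ ν,
      0 < p.2.2 → 0 < r p → |XL μ ν Jm J (fun q => heat μ ν t (r q)) p| ≤
        C * PsiT J.length (r p) t * heat μ ν t (r p) := by
    intro J
    obtain ⟨f, hf, h1⟩ := SC.exists (Jm := Jm) hF hu J
    obtain ⟨C, hC, h2⟩ := hf.bound hF
    refine ⟨C, hC, fun t ht p hp hr => ?_⟩
    have hW : 1 < W p := by
      rw [← hcosh p hp]
      exact one_lt_cosh.2 hr.ne'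
    have h3 := h2 t ht p hp hW
    rwa [← h1 t ht p hp hW, ← hu t ht p hp hW, ← hcosh p hp, arcosh_cosh hr.le] at h3
  choose C hC hb using hJ
  -- there are only finitely many multi-indices of length `k`
  obtain ⟨M, hM⟩ := ((List.finite_length_eq (Fin (μ + ν + 1)) k).image C).bddAbove
  refine ⟨max M 1, by positivity, fun J hJk t ht p hp hr => ?_⟩
  have hCM : C J ≤ max M 1 := (hM ⟨J, hJk, rfl⟩).trans (le_max_left _ _)
  have hP := PsiT_nonneg k hr ht
  have hh : 0 ≤ heat μ ν t (r p) := by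
    rw [hheat t _ ht hr]
    exact (hF 0).2.1 t _ ht (one_lt_cosh.2 hr.ne')
  have h3 := hb J t ht p hp hr
  rw [hJk] at h3
  refine h3.trans ?_
  gcongr

end DR
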